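/- arXiv:1711.04649 — 3 statements merged into one kernel-verified Lean document; each statement's English description precedes it below -/
import Mathlib

section
/- Let K be a number field and Γ₀ a subgroup of the multiplicative group K* of finite rank r. Let Γ = Γ₀ × Γ₀ and let a, b ∈ K*. Then the equation a·x + b·y = 1 has at most 2^{8(2r+2)} solutions with (x,y) ∈ Γ. -/
open NumberField IsDedekindDomain MvPolynomial
open scoped Classical nonZeroDivisors

set_option synthInstance.maxHeartbeats 1000000
set_option maxHeartbeats 1000000

noncomputable section

/-- The projective line over `K`. -/
abbrev P1 (K : Type*) [Field K] := Projectivization K (Fin 2 → K)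

variable {K : Type*} [Field K] [NumberField K]

/-- The additive `v`-adic valuation (order) of `x ∈ K`, with junk value `0` at `x = 0`,
normalized so that it is surjective onto `ℤ`. -/
def ordAt (v : HeightOneSpectrum (𝓞 K)) (x : K) : ℤ :=
  if hx : x = 0 then 0
  else - Multiplicative.toAdd (WithZero.unzero ((v.valuation K).ne_zero_iff.mpr hx))

/-- `min (v(x), v(y))` for a pair of coordinates, not both zero. -/
def minOrd (v : HeightOneSpectrum (𝓞 K)) (x y : K) : ℤ :=
  if x = 0 then ordAt v y else if y = 0 then ordAt v x else min (ordAt v x) (ordAt v y)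

/-- The `v`-adic logarithmic distance between two points of `ℙ¹(K)`:
`δ_v(P,Q) = v(x₁y₂ - x₂y₁) - min(v x₁, v y₁) - min(v x₂, v y₂)`, with value `⊤` when `P = Q`
(it is independent of the choice of homogeneous coordinates, so we compute it on the chosen
representatives). -/
def logDist (v : HeightOneSpectrum (𝓞 K)) (P Q : P1 K) : WithTop ℤ :=
  if P = Q then ⊤
  else ((ordAt v (P.rep 0 * Q.rep 1 - P.rep 1 * Q.rep 0)
        - minOrd v (P.rep 0) (P.rep 1) - minOrd v (Q.rep 0) (Q.rep 1) : ℤ) : WithTop ℤ)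

/-- An endomorphism of `ℙ¹` of degree `d` defined over `K`, given by a pair of homogeneous
forms of degree `d` with no common zero over the algebraic closure, together with the induced
self-map of `ℙ¹(K)`. -/
structure P1Map (K : Type*) [Field K] (d : ℕ) where
  toFun : P1 K → P1 K
  F : MvPolynomial (Fin 2) K
  G : MvPolynomial (Fin 2) K
  homF : F.IsHomogeneous d
  homG : G.IsHomogeneous d
  coprime : ∀ x y : AlgebraicClosure K,
    aeval ![x, y] F = 0 → aeval ![x, y] G = 0 → x = 0 ∧ y = 0
  compat : ∀ (x y : K) (hxy : ![x, y] ≠ 0)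
    (h : ![eval ![x, y] F, eval ![x, y] G] ≠ 0),
    toFun (Projectivization.mk K ![x, y] hxy) =
      Projectivization.mk K ![eval ![x, y] F, eval ![x, y] G] h

variable {d : ℕ}

/-- `φ` has good reduction at the finite place `v`: some representing pair of forms has
coefficients in the valuation ring at `v`, not all in the maximal ideal, and the reductions
of the two forms modulo `v` have no common zero in `ℙ¹` of the algebraic closure of the
residue field. -/
def GoodReductionAt (φ : P1Map K d) (v : HeightOneSpectrum (𝓞 K)) : Prop :=
  ∃ c : K, c ≠ 0 ∧
    ∃ F₀ G₀ : MvPolynomial (Fin 2) (v.valuation (K := K)).valuationSubring,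
      MvPolynomial.map ((v.valuation (K := K)).valuationSubring.subtype) F₀ = C c * φ.F ∧
      MvPolynomial.map ((v.valuation (K := K)).valuationSubring.subtype) G₀ = C c * φ.G ∧
      ((∃ m, F₀.coeff m ∉ IsLocalRing.maximalIdeal (v.valuation (K := K)).valuationSubring) ∨
        (∃ m, G₀.coeff m ∉ IsLocalRing.maximalIdeal (v.valuation (K := K)).valuationSubring)) ∧
      ∀ x y : AlgebraicClosure
          (IsLocalRing.ResidueField (v.valuation (K := K)).valuationSubring),
        eval ![x, y] (MvPolynomial.map
          ((algebraMap (IsLocalRing.ResidueField (v.valuation (K := K)).valuationSubring)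
              (AlgebraicClosure _)).comp
            (IsLocalRing.residue _)) F₀) = 0 →
        eval ![x, y] (MvPolynomial.map
          ((algebraMap (IsLocalRing.ResidueField (v.valuation (K := K)).valuationSubring)
              (AlgebraicClosure _)).comp
            (IsLocalRing.residue _)) G₀) = 0 →
        x = 0 ∧ y = 0

/-- `φ` has good reduction outside `S`, where `S` consists of all archimedean places together
with the finite places in `T`. -/
def GoodReductionOutside (φ : P1Map K d) (T : Finset (HeightOneSpectrum (𝓞 K))) : Prop :=
  ∀ v ∉ T, GoodReductionAt φ v

/-- `P` is a periodic point of `φ`. -/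
def IsPeriodicPoint (φ : P1Map K d) (P : P1 K) : Prop :=
  ∃ n, 0 < n ∧ φ.toFun^[n] P = P

/-- `P` is a preperiodic point of `φ`. -/
def IsPreperiodicPoint (φ : P1Map K d) (P : P1 K) : Prop :=
  ∃ m, IsPeriodicPoint φ (φ.toFun^[m] P)

/-- `P` is a tail point of `φ`: preperiodic but not periodic. -/
def IsTailPoint (φ : P1Map K d) (P : P1 K) : Prop :=
  IsPreperiodicPoint φ P ∧ ¬ IsPeriodicPoint φ P

/-- The set `Tail(φ,K,P)` of `K`-rational tail points of `P`: non-periodic points having `P`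
in their forward orbit. -/
def TailOf (φ : P1Map K d) (P : P1 K) : Set (P1 K) :=
  {Q | ¬ IsPeriodicPoint φ Q ∧ ∃ n, φ.toFun^[n] Q = P}

/-- `P = [a:b]` is a critical point of `φ = [F:G]`: the algebraic condition
`φ([x:y]) = φ([a:b])`, i.e. the form `G(a,b)·F(X,Y) - F(a,b)·G(X,Y)`, vanishes to order
at least `2` at `[a:b]`. -/
def IsCriticalPt (φ : P1Map K d) (P : P1 K) : Prop :=
  ∃ (a b : K) (hab : ![a, b] ≠ 0), P = Projectivization.mk K ![a, b] hab ∧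
    (C b * X 0 - C a * X 1) ^ 2 ∣
      (C (eval ![a, b] φ.G) * φ.F - C (eval ![a, b] φ.F) * φ.G)

/-- `P` belongs to a critical cycle of `φ`: it lies in the orbit of a critical periodic
point. -/
def InCriticalCycle (φ : P1Map K d) (P : P1 K) : Prop :=
  ∃ Q, IsCriticalPt φ Q ∧ IsPeriodicPoint φ Q ∧ ∃ n, φ.toFun^[n] Q = P

/-- The cardinality `|S|` of the set of places `S` consisting of all archimedean places
together with the finite places in `T`. -/
def sCard (K : Type*) [Field K] [NumberField K] (T : Finset (HeightOneSpectrum (𝓞 K))) : ℕ :=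
  T.card + Fintype.card (InfinitePlace K)

/-- `B(s) = 2^{16 s}`. -/
def Bconst (s : ℕ) : ℕ := 2 ^ (16 * s)

/-- `C(n,s) = e^{(6n)^{3n} (n s + 1 - n)}`. -/
def Cconst (n s : ℕ) : ℝ := Real.exp ((6 * n : ℝ) ^ (3 * n) * (n * s + 1 - n))

/-- `CV(d,s) = (3B(s)+13)d + 27B(s) + C(5,s) + 6C(3,s) + 32`. -/
def CVconst (d s : ℕ) : ℝ :=
  (3 * (Bconst s : ℝ) + 13) * d + 27 * (Bconst s : ℝ) + Cconst 5 s + 6 * Cconst 3 s + 32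

/-- `L₁(d,s) = (d-1)(1 + d(1 + B(s)))`. -/
def L1const (d s : ℕ) : ℕ := (d - 1) * (1 + d * (1 + Bconst s))

/-- `L₂(d,s) = max{(2(C(3,s)+2)+1)d + 1, (d-1)(1 + B(s)(B(s) + C(3,s) + 3))}`. -/
def L2const (d s : ℕ) : ℝ :=
  max ((2 * (Cconst 3 s + 2) + 1) * d + 1)
    (((d : ℝ) - 1) * (1 + (Bconst s : ℝ) * ((Bconst s : ℝ) + Cconst 3 s + 3)))

/-- `L₃(d,s) = ((1 + 3B(s))B(s) + 1)(d-1)`. -/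
def L3const (d s : ℕ) : ℕ := ((1 + 3 * Bconst s) * Bconst s + 1) * (d - 1)

/-- `L₄(d,s) = (C(3,s) + 3)(d-1)`. -/
def L4const (d s : ℕ) : ℝ := (Cconst 3 s + 3) * ((d : ℝ) - 1)

end

namespace UEB

section Packing

variable {A : Type*} [AddCommGroup A]

/-- digit sums -/
def digitSum {ι : Type*} (f : ι → A) (n : ℕ) : (j : ℕ) → (Fin j → ι) → A
  | 0, _ => 0
  | j + 1, t => f (t 0) + n • digitSum f n j (fun i => t i.succ)

/-- A seminorm on an abelian group which is homogeneous for integer multiples. -/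
structure GNorm (N : A → ℝ) : Prop where
  add : ∀ x y, N (x + y) ≤ N x + N y
  neg : ∀ x, N (-x) = N x
  smul : ∀ (n : ℕ) x, N (n • x) = n * N x

lemma GNorm.zero {N : A → ℝ} (hN : GNorm N) : N 0 = 0 := by
  have := hN.smul 0 0
  simpa using this

lemma GNorm.nonneg {N : A → ℝ} (hN : GNorm N) (x : A) : 0 ≤ N x := by
  have h1 := hN.add x (-x)
  rw [hN.neg, add_neg_cancel, hN.zero] at h1
  linarith

lemma GNorm.sub_le {N : A → ℝ} (hN : GNorm N) (x y : A) : N (x - y) ≤ N x + N y := by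
  rw [sub_eq_add_neg]
  have := hN.add x (-y)
  rwa [hN.neg] at this

lemma GNorm.sub_comm {N : A → ℝ} (hN : GNorm N) (x y : A) : N (x - y) = N (y - x) := by
  rw [← hN.neg, neg_sub]

lemma digitSum_sep {N : A → ℝ} (hN : GNorm N) {ι : Type*} (f : ι → A) (n : ℕ) {B δ : ℝ}
    (hB : ∀ i, N (f i) ≤ B) (hδ : ∀ i j, i ≠ j → δ ≤ N (f i - f j))
    (hn : 2 * B ≤ ((n : ℝ) - 1) * δ) (j : ℕ) (t t' : Fin j → ι) (htt : t ≠ t') :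
    δ ≤ N (digitSum f n j t - digitSum f n j t') := by
  induction j with
  | zero => exact absurd (Subsingleton.elim t t') htt
  | succ j ih =>
    simp only [digitSum]
    by_cases h : (fun i : Fin j => t i.succ) = fun i : Fin j => t' i.succ
    · rw [h, add_sub_add_right_eq_sub]
      apply hδ
      intro h0
      apply htt
      ext i
      refine Fin.cases h0 (fun i => congrFun h i) i
    · have h1 := ih _ _ h
      set a := digitSum f n j fun i => t i.succ
      set b := digitSum f n j fun i => t' i.succ
      have h2 : n • (a - b) = (f (t 0) + n • a - (f (t' 0) + n • b)) - (f (t 0) - f (t' 0)) := by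
        rw [smul_sub]; abel
      have h3 := hN.smul n (a - b)
      rw [h2] at h3
      have h4 := hN.sub_le (f (t 0) + n • a - (f (t' 0) + n • b)) (f (t 0) - f (t' 0))
      have h5 := hN.sub_le (f (t 0)) (f (t' 0))
      have h6 := hB (t 0)
      have h7 := hB (t' 0)
      have h8 : (n : ℝ) * δ ≤ n * N (a - b) := by gcongr
      nlinarith

lemma le_of_pow_le_mul_pow {a b C : ℕ} (h : ∀ j : ℕ, a ^ j ≤ C * b ^ j) : a ≤ b := by
  by_contra hab
  push Not at hab
  rcases Nat.eq_zero_or_pos b with rfl | hb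
  · have := h 1
    simp at this; omega
  have hr : (1 : ℝ) < (a : ℝ) / b := by
    rw [one_lt_div (by exact_mod_cast hb)]; exact_mod_cast hab
  obtain ⟨j, hj⟩ := pow_unbounded_of_one_lt (C : ℝ) hr
  have h1 : ((a : ℝ)) ^ j ≤ C * (b : ℝ) ^ j := by exact_mod_cast h j
  rw [div_pow, lt_div_iff₀ (by positivity)] at hj
  linarith

lemma packing {N : A → ℝ} (hN : GNorm N) {W : Type*} [AddCommGroup W] [Module ℚ W]
    [Module.Finite ℚ W] (φ : A →+ W) (hφ : ∀ z, φ z = 0 → N z = 0)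
    {ι : Type*} [Fintype ι] (f : ι → A) (n : ℕ) (hn2 : 2 ≤ n) {B δ : ℝ} (hδ0 : 0 < δ)
    (hB : ∀ i, N (f i) ≤ B) (hδ : ∀ i j, i ≠ j → δ ≤ N (f i - f j))
    (hn : 2 * B ≤ ((n : ℝ) - 1) * δ) :
    Fintype.card ι ≤ n ^ Module.finrank ℚ W := by
  set R := Module.finrank ℚ W with hR
  let b := Module.finBasis ℚ W
  -- common denominator
  obtain ⟨d, hd0, g, hg⟩ : ∃ d : ℕ, d ≠ 0 ∧ ∃ g : ι → Fin R → ℤ,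
      ∀ i k, (g i k : ℚ) = d * b.repr (φ (f i)) k := by
    refine ⟨∏ i : ι, ∏ k : Fin R, (b.repr (φ (f i)) k).den, ?_, ?_⟩
    · simp [Finset.prod_ne_zero_iff]
    · have : ∀ i k, ∃ z : ℤ, (z : ℚ) =
        ((∏ i : ι, ∏ k : Fin R, (b.repr (φ (f i)) k).den : ℕ) : ℚ) * b.repr (φ (f i)) k := by
        intro i k
        have hdvd : (b.repr (φ (f i)) k).den ∣ ∏ i : ι, ∏ k : Fin R, (b.repr (φ (f i)) k).den :=
          (Finset.dvd_prod_of_mem (fun k => (b.repr (φ (f i)) k).den) (Finset.mem_univ k)).trans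
            (Finset.dvd_prod_of_mem (fun i => ∏ k : Fin R, (b.repr (φ (f i)) k).den)
              (Finset.mem_univ i))
        obtain ⟨m, hm⟩ := hdvd
        refine ⟨m * (b.repr (φ (f i)) k).num, ?_⟩
        rw [hm]
        push_cast
        rw [mul_comm ((b.repr (φ (f i)) k).den : ℚ), mul_assoc, Rat.den_mul_eq_num]
      choose g hg using this
      exact ⟨g, hg⟩
  obtain ⟨C, hC⟩ : ∃ C : ℕ, ∀ i k, |g i k| ≤ (C : ℤ) := by
    refine ⟨∑ i, ∑ k, (g i k).natAbs, fun i k => ?_⟩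
    rw [Int.abs_eq_natAbs]
    norm_cast
    exact (Finset.single_le_sum (f := fun k => (g i k).natAbs) (fun _ _ => Nat.zero_le _)
      (Finset.mem_univ k)).trans (Finset.single_le_sum (f := fun i => ∑ k, (g i k).natAbs)
        (fun _ _ => Nat.zero_le _) (Finset.mem_univ i))
  -- coordinates of digit sums
  have key : ∀ (j : ℕ) (t : Fin j → ι), ∃ z : Fin R → ℤ,
      (∀ k, (z k : ℚ) = d * b.repr (φ (digitSum f n j t)) k) ∧
      ∀ k, |z k| ≤ (C : ℤ) * ((n : ℤ) ^ j - 1) := by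
    intro j
    induction j with
    | zero =>
      intro t
      exact ⟨0, by simp [digitSum], by simp⟩
    | succ j ih =>
      intro t
      obtain ⟨z, hz, hz'⟩ := ih (fun i => t i.succ)
      refine ⟨fun k => g (t 0) k + n * z k, fun k => ?_, fun k => ?_⟩
      · simp only [digitSum, map_add, map_nsmul, Finsupp.add_apply, Finsupp.smul_apply]
        push_cast
        rw [hg, hz, nsmul_eq_mul]
        ring
      · have h1 := hC (t 0) k
        have h2 := hz' k
        calc |g (t 0) k + n * z k| ≤ |g (t 0) k| + |(n : ℤ) * z k| := abs_add_le _ _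
          _ = |g (t 0) k| + n * |z k| := by rw [abs_mul, Nat.abs_cast]
          _ ≤ C + n * (C * ((n : ℤ) ^ j - 1)) := by gcongr
          _ ≤ C * ((n : ℤ) ^ (j + 1) - 1) := by
            have h3 : (C : ℤ) * 2 ≤ C * n := by gcongr; exact_mod_cast hn2
            rw [pow_succ]
            linarith
  apply le_of_pow_le_mul_pow (C := (2 * C + 1) ^ R)
  intro j
  choose z hz hz' using key j
  have hinj : Function.Injective z := by
    intro t t' h
    by_contra hne
    have h1 := digitSum_sep hN f n hB hδ hn j t t' hne
    have h2 : φ (digitSum f n j t - digitSum f n j t') = 0 := by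
      rw [map_sub, sub_eq_zero]
      apply b.repr.injective
      ext k
      have h3 := hz t k
      have h4 := hz t' k
      rw [h, h4] at h3
      have hd : (d : ℚ) ≠ 0 := by exact_mod_cast hd0
      exact (mul_left_cancel₀ hd h3).symm
    have := hφ _ h2
    linarith
  have hmem : ∀ t, z t ∈ Fintype.piFinset (fun _ : Fin R => Finset.Icc (-((C : ℤ) * (n : ℤ) ^ j))
      ((C : ℤ) * (n : ℤ) ^ j)) := by
    intro t
    rw [Fintype.mem_piFinset]
    intro k
    rw [Finset.mem_Icc]
    have h1 := abs_le.mp (hz' t k)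
    have h0 : (0 : ℤ) ≤ C := by positivity
    constructor <;> nlinarith [h1.1, h1.2]
  have hcard := Finset.card_le_card_of_injOn (s := (Finset.univ : Finset (Fin j → ι))) z
    (fun t _ => hmem t) hinj.injOn
  rw [Finset.card_univ, Fintype.card_fun, Fintype.card_fin, Fintype.card_piFinset] at hcard
  refine hcard.trans ?_
  simp only [Finset.prod_const, Finset.card_univ, Fintype.card_fin, Int.card_Icc]
  calc _ ≤ ((2 * C + 1) * n ^ j) ^ R := by
        gcongr
        have h1 : (C : ℤ) * (n : ℤ) ^ j + 1 - -((C : ℤ) * (n : ℤ) ^ j)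
          = ((2 * C * n ^ j + 1 : ℕ) : ℤ) := by push_cast; ring
        rw [h1, Int.toNat_natCast]
        have : 1 ≤ n ^ j := Nat.one_le_pow _ _ (by omega)
        nlinarith
    _ = (2 * C + 1) ^ R * (n ^ R) ^ j := by
        rw [mul_pow, ← pow_mul, ← pow_mul, mul_comm j R]

lemma packing_two {N : A → ℝ} (hN : GNorm N) {W : Type*} [AddCommGroup W] [Module ℚ W]
    [Module.Finite ℚ W] (φ : A →+ W) (hφ : ∀ z, φ z = 0 → N z = 0)
    {ι : Type*} (s : Finset ι) (f : ι → A) (n : ℕ) (hn2 : 2 ≤ n) {B δ : ℝ} (hδ0 : 0 < δ)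
    (hB : ∀ i ∈ s, N (f i) ≤ B)
    (hn : 2 * B ≤ ((n : ℝ) - 1) * δ)
    (h3 : ∀ x ∈ s, ∀ y ∈ s, ∀ z ∈ s, x ≠ y → x ≠ z → y ≠ z →
      N (f y - f x) < δ → N (f z - f x) < δ → False) :
    s.card ≤ 2 * n ^ Module.finrank ℚ W := by
  let P : Finset ι → Prop := fun M => ∀ x ∈ M, ∀ y ∈ M, x ≠ y → δ ≤ N (f x - f y)
  obtain ⟨M, hM, hmax⟩ : ∃ M ∈ s.powerset.filter P, ∀ M' ∈ s.powerset.filter P,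
      M'.card ≤ M.card :=
    Finset.exists_max_image _ _ ⟨∅, by simp [P]⟩
  rw [Finset.mem_filter, Finset.mem_powerset] at hM
  have hMcard : M.card ≤ n ^ Module.finrank ℚ W := by
    have := packing hN φ hφ (fun i : M => f i) n hn2 hδ0 (fun i => hB i (hM.1 i.2))
      (fun i j hij => hM.2 i i.2 j j.2 (fun h => hij (Subtype.ext h))) hn
    simpa using this
  have hcov : s ⊆ M.biUnion (fun x => s.filter (fun y => N (f y - f x) < δ)) := by
    intro y hy
    rw [Finset.mem_biUnion]
    by_contra hcon
    push Not at hcon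
    have hfar : ∀ x ∈ M, δ ≤ N (f y - f x) := by
      intro x hx
      have := hcon x hx
      rw [Finset.mem_filter] at this
      push Not at this
      exact this hy
    have hyM : y ∉ M := by
      intro hyM
      have := hfar y hyM
      rw [sub_self, hN.zero] at this
      linarith
    have := hmax (insert y M) (by
      rw [Finset.mem_filter, Finset.mem_powerset]
      refine ⟨Finset.insert_subset hy hM.1, ?_⟩
      intro a ha b hb hab
      rw [Finset.mem_insert] at ha hb
      rcases ha with rfl | ha <;> rcases hb with rfl | hb
      · exact absurd rfl hab
      · exact hfar b hb
      · rw [hN.sub_comm]; exact hfar a ha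
      · exact hM.2 a ha b hb hab)
    rw [Finset.card_insert_of_notMem hyM] at this
    omega
  calc s.card ≤ _ := Finset.card_le_card hcov
    _ ≤ M.card * 2 := by
      apply Finset.card_biUnion_le_card_mul
      intro x hx
      by_contra hcon
      push Not at hcon
      have hxm : x ∈ s.filter (fun y => N (f y - f x) < δ) := by
        rw [Finset.mem_filter, sub_self, hN.zero]
        exact ⟨hM.1 hx, hδ0⟩
      have h1 : 1 < ((s.filter (fun y => N (f y - f x) < δ)).erase x).card := by
        rw [Finset.card_erase_of_mem hxm]; omega
      obtain ⟨y, hy, z, hz, hyz⟩ := Finset.one_lt_card.mp h1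
      simp only [Finset.mem_erase, Finset.mem_filter] at hy hz
      exact h3 x (hM.1 hx) y hy.2.1 z hz.2.1 hy.1.symm hz.1.symm hyz hy.2.2 hz.2.2
    _ ≤ 2 * n ^ Module.finrank ℚ W := by rw [mul_comm]; gcongr

end Packing

end UEB

namespace UEB

section Pade

/-- Coefficients of the Padé polynomials. -/
def padeCoeff (p q S j : ℕ) : ℤ := (-1) ^ j * (S.choose (q - j) : ℤ) * ((p + j).choose j : ℤ)

/-- The Padé polynomial. -/
def padeEval {R : Type*} [CommRing R] (p q S : ℕ) (x : R) : R :=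
  ∑ j ∈ Finset.range (q + 1), (padeCoeff p q S j : R) * x ^ j

/-- The reversed Padé polynomial. -/
def padeRev {R : Type*} [CommRing R] (p r S : ℕ) (x : R) : R :=
  ∑ j ∈ Finset.range (r + 1), (padeCoeff p r S j : R) * x ^ (r - j)

lemma beta_rec (a b : ℕ) : ((a : ℝ) + 1) * ∫ s in (0:ℝ)..1, s ^ a * (1 - s) ^ (b + 1) =
    ((b : ℝ) + 1) * ∫ s in (0:ℝ)..1, s ^ (a + 1) * (1 - s) ^ b := by
  have h := intervalIntegral.integral_eq_sub_of_hasDerivAt (a := (0:ℝ)) (b := 1)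
    (f := fun s : ℝ => s ^ (a + 1) * (1 - s) ^ (b + 1))
    (f' := fun s : ℝ => ((a : ℝ) + 1) * (s ^ a * (1 - s) ^ (b + 1)) -
      ((b : ℝ) + 1) * (s ^ (a + 1) * (1 - s) ^ b)) (fun s _ => by
      have h1 := (hasDerivAt_pow (a + 1) s).mul (((hasDerivAt_id s).const_sub 1).pow (b + 1))
      convert! h1 using 1
      simp
      ring) (by
      apply Continuous.intervalIntegrable
      fun_prop)
  rw [intervalIntegral.integral_sub (by apply Continuous.intervalIntegrable; fun_prop)
    (by apply Continuous.intervalIntegrable; fun_prop), intervalIntegral.integral_const_mul,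
    intervalIntegral.integral_const_mul] at h
  simp at h
  linarith

lemma beta_int (a b : ℕ) : ∫ s in (0:ℝ)..1, s ^ a * (1 - s) ^ b =
    (a.factorial * b.factorial : ℝ) / (a + b + 1).factorial := by
  induction b generalizing a with
  | zero =>
    simp only [pow_zero, mul_one, integral_pow, Nat.factorial_zero, Nat.cast_one, add_zero]
    rw [Nat.factorial_succ]
    have : (a.factorial : ℝ) ≠ 0 := by positivity
    push_cast
    field_simp
    simp
  | succ b ih =>
    have h := beta_rec a b
    rw [ih] at h
    have ha : ((a : ℝ) + 1) ≠ 0 := by positivity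
    apply mul_left_cancel₀ ha
    rw [h, show a + 1 + b + 1 = a + (b + 1) + 1 by ring, Nat.factorial_succ a, Nat.factorial_succ b]
    push_cast
    ring

lemma coeff_beta (p q r j : ℕ) (hj : j ≤ q) :
    ((p + q + r + 1).factorial : ℝ) / (p.factorial * q.factorial * r.factorial) *
      ((q.choose j : ℝ) * (-1) ^ j * (((p + j).factorial * r.factorial : ℝ) /
        (p + j + r + 1).factorial)) = (padeCoeff p q (p + q + r + 1) j : ℝ) := by
  unfold padeCoeff
  push_cast
  obtain ⟨i, rfl⟩ := Nat.exists_eq_add_of_le hj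
  rw [Nat.cast_choose ℝ (show j ≤ j + i by omega),
    Nat.cast_choose ℝ (show j + i - j ≤ p + (j + i) + r + 1 by omega),
    Nat.cast_choose ℝ (show j ≤ p + j by omega)]
  rw [show j + i - j = i by omega, show p + (j + i) + r + 1 - i = p + j + r + 1 by omega,
    show p + j - j = p by omega]
  have h1 : (p.factorial : ℝ) ≠ 0 := by positivity
  have h2 : (j.factorial : ℝ) ≠ 0 := by positivity
  have h3 : (i.factorial : ℝ) ≠ 0 := by positivity
  have h4 : (r.factorial : ℝ) ≠ 0 := by positivity
  have h5 : ((j + i).factorial : ℝ) ≠ 0 := by positivity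
  have h6 : ((p + j + r + 1).factorial : ℝ) ≠ 0 := by positivity
  field_simp

lemma int_expand (p q r : ℕ) (x : ℝ) :
    ((p + q + r + 1).factorial : ℝ) / (p.factorial * q.factorial * r.factorial) *
    ∫ t in (0:ℝ)..x, t ^ p * (1 - t) ^ q * (x - t) ^ r =
      x ^ (p + r + 1) * padeEval p q (p + q + r + 1) x := by
  have h := intervalIntegral.smul_integral_comp_mul_left (a := 0) (b := 1)
    (fun t : ℝ => t ^ p * (1 - t) ^ q * (x - t) ^ r) x
  simp only [mul_zero, mul_one, smul_eq_mul] at h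
  rw [← h]
  have h2 : ∀ s : ℝ, (x * s) ^ p * (1 - x * s) ^ q * (x - x * s) ^ r =
      ∑ j ∈ Finset.range (q + 1), x ^ (p + r) * ((q.choose j : ℝ) * (-1) ^ j * x ^ j) *
        (s ^ (p + j) * (1 - s) ^ r) := by
    intro s
    rw [show (1 : ℝ) - x * s = (-(x * s)) + 1 by ring, add_pow, Finset.mul_sum, Finset.sum_mul]
    refine Finset.sum_congr rfl fun j _ => ?_
    rw [show x - x * s = x * (1 - s) by ring, neg_pow]
    simp only [one_pow, mul_pow, pow_add]
    ring
  simp_rw [h2]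
  rw [intervalIntegral.integral_finsetSum (fun j _ => by
    apply Continuous.intervalIntegrable; fun_prop)]
  simp_rw [intervalIntegral.integral_const_mul, beta_int]
  unfold padeEval
  rw [Finset.mul_sum, Finset.mul_sum, Finset.mul_sum]
  refine Finset.sum_congr rfl fun j hj => ?_
  rw [← coeff_beta p q r j (by rw [Finset.mem_range] at hj; omega)]
  push_cast
  ring

lemma int_expand_rev (p q r : ℕ) (x : ℝ) :
    ((p + q + r + 1).factorial : ℝ) / (p.factorial * q.factorial * r.factorial) *
    ∫ t in (0:ℝ)..1, t ^ p * (1 - t) ^ q * (x - t) ^ r =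
      padeRev p r (p + q + r + 1) x := by
  have h2 : ∀ t : ℝ, t ^ p * (1 - t) ^ q * (x - t) ^ r =
      ∑ j ∈ Finset.range (r + 1), ((r.choose j : ℝ) * (-1) ^ j * x ^ (r - j)) *
        (t ^ (p + j) * (1 - t) ^ q) := by
    intro t
    rw [show x - t = (-t) + x by ring, add_pow, Finset.mul_sum]
    refine Finset.sum_congr rfl fun j _ => ?_
    rw [neg_pow]
    simp only [pow_add]
    ring
  simp_rw [h2]
  rw [intervalIntegral.integral_finsetSum (fun j _ => by
    apply Continuous.intervalIntegrable; fun_prop)]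
  simp_rw [intervalIntegral.integral_const_mul, beta_int]
  unfold padeRev
  rw [Finset.mul_sum]
  refine Finset.sum_congr rfl fun j hj => ?_
  have := coeff_beta p r q j (by rw [Finset.mem_range] at hj; omega)
  rw [show p + r + q + 1 = p + q + r + 1 by ring] at this
  rw [← this]
  ring

lemma pade_real (p q r : ℕ) (x : ℝ) :
    x ^ (p + r + 1) * padeEval p q (p + q + r + 1) x +
      (-1) ^ r * ((1 - x) ^ (q + r + 1) * padeEval q p (p + q + r + 1) (1 - x)) =
      padeRev p r (p + q + r + 1) x := by
  rw [← int_expand, ← int_expand_rev]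
  have h1 := int_expand q p r (1 - x)
  rw [show q + p + r + 1 = p + q + r + 1 by ring] at h1
  rw [← h1]
  have h2 : ∫ t in (0:ℝ)..(1 - x), t ^ q * (1 - t) ^ p * (1 - x - t) ^ r =
      (-1) ^ r * ∫ t in x..1, t ^ p * (1 - t) ^ q * (x - t) ^ r := by
    have h3 := intervalIntegral.integral_comp_sub_left (a := x) (b := 1)
      (fun t : ℝ => t ^ q * (1 - t) ^ p * (1 - x - t) ^ r) 1
    simp only [sub_self] at h3
    rw [← h3, ← intervalIntegral.integral_const_mul]
    congr 1
    ext t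
    rw [show (1:ℝ) - x - (1 - t) = -(x - t) by ring, neg_pow (x - t)]
    ring
  rw [h2]
  have h4 : ∫ t in (0:ℝ)..1, t ^ p * (1 - t) ^ q * (x - t) ^ r =
    (∫ t in (0:ℝ)..x, t ^ p * (1 - t) ^ q * (x - t) ^ r) +
      ∫ t in x..1, t ^ p * (1 - t) ^ q * (x - t) ^ r := by
    rw [intervalIntegral.integral_add_adjacent_intervals] <;>
    · apply Continuous.intervalIntegrable; fun_prop
  rw [h4]
  have h5 : ((-1 : ℝ) ^ r) * (-1) ^ r = 1 := by rw [← mul_pow]; simp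
  rw [mul_comm (q.factorial : ℝ)]
  linear_combination ((p + q + r + 1).factorial : ℝ) / (p.factorial * q.factorial * r.factorial) *
    (∫ t in x..1, t ^ p * (1 - t) ^ q * (x - t) ^ r) * h5

lemma map_padeEval {R S : Type*} [CommRing R] [CommRing S] (g : R →+* S) (p q n : ℕ) (x : R) :
    g (padeEval p q n x) = padeEval p q n (g x) := by
  simp [padeEval]

lemma map_padeRev {R S : Type*} [CommRing R] [CommRing S] (g : R →+* S) (p q n : ℕ) (x : R) :
    g (padeRev p q n x) = padeRev p q n (g x) := by
  simp [padeRev]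

lemma pade_poly (p q r : ℕ) :
    (Polynomial.X : Polynomial ℤ) ^ (p + r + 1) * padeEval p q (p + q + r + 1) Polynomial.X +
      (-1) ^ r * ((1 - Polynomial.X) ^ (q + r + 1) *
        padeEval q p (p + q + r + 1) (1 - Polynomial.X)) =
      padeRev p r (p + q + r + 1) Polynomial.X := by
  apply Polynomial.map_injective (Int.castRingHom ℝ) (RingHom.injective_int _)
  apply Polynomial.funext
  intro x
  have h := pade_real p q r x
  have e1 : ∀ P : Polynomial ℤ, Polynomial.eval x (P.map (Int.castRingHom ℝ)) =
    Polynomial.eval₂RingHom (Int.castRingHom ℝ) x P := by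
    intro P; rw [Polynomial.eval_map]; rfl
  rw [e1, e1]
  simp only [map_add, map_mul, map_pow, map_padeEval, map_padeRev, map_sub, map_neg, map_one]
  simpa using h

lemma pade {R : Type*} [CommRing R] (p q r : ℕ) (x y : R) (hxy : x + y = 1) :
    x ^ (p + r + 1) * padeEval p q (p + q + r + 1) x +
      (-1) ^ r * (y ^ (q + r + 1) * padeEval q p (p + q + r + 1) y) =
      padeRev p r (p + q + r + 1) x := by
  obtain rfl : y = 1 - x := by rw [← hxy]; ring
  have h := congrArg (Polynomial.eval₂RingHom (Int.castRingHom R) x) (pade_poly p q r)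
  simp only [map_add, map_mul, map_pow, map_padeEval, map_padeRev, map_sub, map_neg, map_one] at h
  simpa using h

/-- sum of absolute values of the coefficients -/
lemma padeCoeff_sum_le (p q S : ℕ) :
    ∑ j ∈ Finset.range (q + 1), |padeCoeff p q S j| ≤ (2 : ℤ) ^ (S + (p + q)) := by
  have h1 : ∀ j ∈ Finset.range (q + 1), |padeCoeff p q S j| ≤ (S.choose (q - j) : ℤ) * 2 ^ (p + q) := by
    intro j hj
    rw [Finset.mem_range] at hj
    unfold padeCoeff
    rw [abs_mul, abs_mul, abs_pow, abs_neg, abs_one, one_pow, one_mul, Nat.abs_cast, Nat.abs_cast]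
    gcongr
    have h2 : (p + j).choose j ≤ 2 ^ (p + j) := Nat.choose_le_two_pow _ _
    have h3 : 2 ^ (p + j) ≤ 2 ^ (p + q) := Nat.pow_le_pow_right (by norm_num) (by omega)
    exact_mod_cast h2.trans h3
  refine (Finset.sum_le_sum h1).trans ?_
  rw [← Finset.sum_mul, pow_add 2 S (p + q)]
  refine mul_le_mul_of_nonneg_right ?_ (by positivity)
  rw [← Nat.cast_sum]
  have h4 : ∑ j ∈ Finset.range (q + 1), S.choose (q - j) = ∑ j ∈ Finset.range (q + 1), S.choose j := by
    have := Finset.sum_range_reflect (fun j => S.choose j) (q + 1)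
    simpa using this
  rw [h4]
  have h5 : ∑ j ∈ Finset.range (q + 1), S.choose j ≤ 2 ^ S := by
    rw [← Nat.sum_range_choose]
    rcases le_total q S with h | h
    · exact Finset.sum_le_sum_of_subset (Finset.range_mono (by omega))
    · refine le_of_eq ?_
      symm
      apply Finset.sum_subset (Finset.range_mono (by omega))
      intro j _ hj
      rw [Finset.mem_range] at hj
      exact Nat.choose_eq_zero_of_lt (by omega)
  exact_mod_cast h5

end Pade

end UEB


namespace UEB

section Local
open Height Height.AdmissibleAbsValues Function

variable {K : Type*} [Field K] [AdmissibleAbsValues K]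

lemma finsupp_iSup {ι : Type*} [Finite ι] {x : ι → K} (hx : x ≠ 0) :
    (fun v : nonarchAbsVal (K := K) ↦ ⨆ i, v.val (x i)).HasFiniteMulSupport := by
  have : Nonempty {j // x j ≠ 0} := nonempty_subtype.mpr <| ne_iff.mp hx
  suffices (fun v : nonarchAbsVal (K := K) ↦
      ⨆ i : {j // x j ≠ 0}, v.val (x i)).HasFiniteMulSupport by
    convert! this with v
    obtain ⟨i, hi⟩ : ∃ j, x j ≠ 0 := Function.ne_iff.mp hx
    have : Nonempty ι := .intro i
    refine le_antisymm (ciSup_le fun j ↦ ?_) (ciSup_le fun ⟨j, hj⟩ ↦ Finite.le_ciSup_of_le j le_rfl)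
    rcases eq_or_ne (x j) 0 with h | h
    · rw [h, v.val.map_zero]
      exact Real.iSup_nonneg' ⟨⟨i, hi⟩, v.val.nonneg ..⟩
    · exact Finite.le_ciSup_of_le ⟨j, h⟩ le_rfl
  fun_prop (disch := grind)

lemma height_le_local {ι ι' : Type*} [Finite ι] [Finite ι'] {x : ι → K} {y : ι' → K}
    (hx : x ≠ 0) (hy : y ≠ 0) (n : ℕ) (C : ℝ)
    (harch : ∀ v ∈ archAbsVal (K := K), ∀ i, v (x i) ≤ C * (⨆ j, v (y j)) ^ n)
    (hna : ∀ v ∈ nonarchAbsVal (K := K), ∀ i, v (x i) ≤ (⨆ j, v (y j)) ^ n) :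
    mulHeight x ≤ C ^ totalWeight K * mulHeight y ^ n := by
  have : Nonempty ι := (ne_iff.mp hx).nonempty
  rw [← mulHeight_pow]
  have hyn : y ^ n ≠ 0 := pow_ne_zero n hy
  have H (v : AbsoluteValue K ℝ) : ⨆ i : ι', v ((y ^ n) i) = (⨆ i, v (y i)) ^ n := by
    have : Nonempty ι' := (ne_iff.mp hy).nonempty
    simp only [Pi.pow_apply, map_pow]
    simp +singlePass only [← Real.coe_toNNReal _ (v.nonneg _)]
    norm_cast
    exact (pow_left_mono n).map_ciSup_of_continuousAt (continuous_pow n).continuousAt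
      (Finite.bddAbove_range _) |>.symm
  rw [mulHeight_eq hx, mulHeight_eq hyn, ← mul_assoc]
  have h1 : (archAbsVal.map fun v : AbsoluteValue K ℝ ↦ ⨆ i, v (x i)).prod ≤
      C ^ totalWeight K * (archAbsVal.map fun v : AbsoluteValue K ℝ ↦ ⨆ i, v ((y ^ n) i)).prod := by
    rw [← Multiset.prod_replicate, totalWeight, ← Multiset.map_const', ← Multiset.prod_map_mul]
    refine Multiset.prod_map_le_prod_map₀ _ _
      (fun v _ ↦ Real.iSup_nonneg_of_nonnegHomClass v _) fun v hv ↦ ?_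
    rw [H]
    exact ciSup_le (harch v hv)
  refine mul_le_mul h1 ?_ (finprod_nonneg fun v ↦ Real.iSup_nonneg_of_nonnegHomClass v.val _)
    (le_trans (Multiset.prod_map_nonneg fun v _ ↦ Real.iSup_nonneg_of_nonnegHomClass v _) h1)
  refine finprod_le_finprod (finsupp_iSup hx)
      (fun v ↦ Real.iSup_nonneg_of_nonnegHomClass v.val _) (finsupp_iSup hyn) fun v ↦ ?_
  simp only [H]
  exact ciSup_le (hna v.1 v.2)

lemma tensor_ne_zero {ι ι' : Type*} {x : ι → K} (hx : x ≠ 0) {y : ι' → K} (hy : y ≠ 0) :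
    (fun a : ι × ι' ↦ x a.1 * y a.2) ≠ 0 := by
  obtain ⟨i, hi⟩ := ne_iff.mp hx
  obtain ⟨j, hj⟩ := ne_iff.mp hy
  exact ne_iff.mpr ⟨⟨i, j⟩, mul_ne_zero hi hj⟩

lemma cross_local {a b : Fin 3 → K} {x : K} (i j : Fin 3) (hx : x = a i * b j - a j * b i) :
    (∀ v : AbsoluteValue K ℝ,
      v x ≤ 2 * (⨆ t : Fin 3 × Fin 3, v (a t.1 * b t.2)) ^ 1) ∧
    (∀ v ∈ nonarchAbsVal (K := K), v x ≤ (⨆ t : Fin 3 × Fin 3, v (a t.1 * b t.2)) ^ 1) := by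
  have h (v : AbsoluteValue K ℝ) (i j : Fin 3) :
      v (a i * b j) ≤ ⨆ t : Fin 3 × Fin 3, v (a t.1 * b t.2) :=
    Finite.le_ciSup_of_le (f := fun t : Fin 3 × Fin 3 => v (a t.1 * b t.2)) (i, j) le_rfl
  subst hx
  constructor
  · intro v
    have h1 := v.sub_le_add (a i * b j) (a j * b i)
    linarith [h v i j, h v j i]
  · intro v hv
    have h1 := isNonarchimedean v hv (a i * b j) (-(a j * b i))
    rw [v.map_neg, ← sub_eq_add_neg] at h1
    rw [pow_one]
    exact h1.trans (max_le (h v i j) (h v j i))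

lemma cross_height {w a b : Fin 3 → K} (hw : w ≠ 0)
    (h1 : w 0 * a 0 + w 1 * a 1 + w 2 * a 2 = 0) (h2 : w 0 * b 0 + w 1 * b 1 + w 2 * b 2 = 0)
    (hne : ∃ i j, a i * b j ≠ a j * b i) :
    logHeight w ≤ totalWeight K * Real.log 2 + logHeight a + logHeight b := by
  have ha : a ≠ 0 := by rintro rfl; simp at hne
  have hb : b ≠ 0 := by rintro rfl; simp at hne
  let c : Fin 3 → K := ![a 1 * b 2 - a 2 * b 1, a 2 * b 0 - a 0 * b 2, a 0 * b 1 - a 1 * b 0]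
  have hc : c ≠ 0 := by
    intro h
    have e0 : a 1 * b 2 - a 2 * b 1 = 0 := congrFun h 0
    have e1 : a 2 * b 0 - a 0 * b 2 = 0 := congrFun h 1
    have e2 : a 0 * b 1 - a 1 * b 0 = 0 := congrFun h 2
    rw [sub_eq_zero] at e0 e1 e2
    obtain ⟨i, j, hij⟩ := hne
    apply hij
    fin_cases i <;> fin_cases j <;> simp [e0, e1, e2]
  have hpr : ∀ i j, w i * c j = w j * c i := by
    have p01 : w 0 * (a 2 * b 0 - a 0 * b 2) = w 1 * (a 1 * b 2 - a 2 * b 1) := by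
      linear_combination a 2 * h2 - b 2 * h1
    have p02 : w 0 * (a 0 * b 1 - a 1 * b 0) = w 2 * (a 1 * b 2 - a 2 * b 1) := by
      linear_combination b 1 * h1 - a 1 * h2
    have p12 : w 1 * (a 0 * b 1 - a 1 * b 0) = w 2 * (a 2 * b 0 - a 0 * b 2) := by
      linear_combination a 0 * h2 - b 0 * h1
    intro i j
    fin_cases i <;> fin_cases j <;> simp [c, p01, p02, p12]
  obtain ⟨k, hk⟩ := ne_iff.mp hw
  have hk : w k ≠ 0 := hk
  have hcw : c = (c k / w k) • w := by
    ext j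
    rw [Pi.smul_apply, smul_eq_mul, div_mul_eq_mul_div, eq_div_iff hk, mul_comm, hpr k j, mul_comm]
  have hck : c k / w k ≠ 0 := by
    intro h
    rw [h, zero_smul] at hcw
    exact hc hcw
  have e : logHeight w = logHeight c := by
    conv_rhs => rw [hcw]
    rw [logHeight_smul_eq_logHeight _ hck]
  rw [e]
  have hloc : ∀ k, ∃ i j, c k = a i * b j - a j * b i := by
    intro k
    fin_cases k
    · exact ⟨1, 2, rfl⟩
    · exact ⟨2, 0, rfl⟩
    · exact ⟨0, 1, rfl⟩
  have hm := height_le_local hc (tensor_ne_zero ha hb) 1 2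
    (fun v _ i => by obtain ⟨p, q, h⟩ := hloc i; exact (cross_local p q h).1 v)
    (fun v hv i => by obtain ⟨p, q, h⟩ := hloc i; exact (cross_local p q h).2 v hv)
  rw [pow_one, mulHeight_fun_mul_eq ha hb] at hm
  simp only [logHeight_eq_log_mulHeight]
  have := Real.log_le_log (mulHeight_pos c) hm
  rw [Real.log_mul (by positivity) (mul_ne_zero (mulHeight_ne_zero _) (mulHeight_ne_zero _)),
    Real.log_mul (mulHeight_ne_zero _) (mulHeight_ne_zero _), Real.log_pow] at this
  linarith

end Local

end UEB


namespace UEB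

section PadeDet
open Polynomial

lemma padeEval_natDegree_le (p q S : ℕ) : (padeEval p q S (Polynomial.X : ℤ[X])).natDegree ≤ q := by
  unfold padeEval
  refine natDegree_sum_le_of_forall_le _ _ fun j hj => ?_
  rw [Finset.mem_range] at hj
  refine (natDegree_mul_le).trans ?_
  rw [natDegree_intCast, Polynomial.natDegree_X_pow]
  omega

lemma padeRev_natDegree_le (p q S : ℕ) : (padeRev p q S (Polynomial.X : ℤ[X])).natDegree ≤ q := by
  unfold padeRev
  refine natDegree_sum_le_of_forall_le _ _ fun j hj => ?_
  rw [Finset.mem_range] at hj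
  refine (natDegree_mul_le).trans ?_
  rw [natDegree_intCast, Polynomial.natDegree_X_pow]
  omega

lemma padeEval_coeff (p q S : ℕ) : (padeEval p q S (Polynomial.X : ℤ[X])).coeff q = padeCoeff p q S q := by
  unfold padeEval
  rw [Polynomial.finsetSum_coeff, Finset.sum_eq_single q]
  · rw [← C_eq_intCast, coeff_C_mul_X_pow]; simp
  · intro j _ hj
    rw [← C_eq_intCast, coeff_C_mul_X_pow]; simp [hj.symm]
  · simp

lemma padeRev_coeff (p q S : ℕ) : (padeRev p q S (Polynomial.X : ℤ[X])).coeff q = padeCoeff p q S 0 := by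
  unfold padeRev
  rw [Polynomial.finsetSum_coeff, Finset.sum_eq_single 0]
  · rw [← C_eq_intCast, coeff_C_mul_X_pow]; simp
  · intro j hj hj0
    rw [Finset.mem_range] at hj
    rw [← C_eq_intCast, coeff_C_mul_X_pow, if_neg (by omega)]
  · simp

lemma pade_det_poly (k : ℕ) : ∃ d : ℤ, d ≠ 0 ∧
    padeEval (k + 1) (k + 1) (k + 1 + (k + 1) + k + 1) (Polynomial.X : ℤ[X]) *
      ((-1) ^ (k + 1) * padeEval k k (k + k + (k + 1) + 1) (1 - Polynomial.X : ℤ[X])) -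
    padeEval k k (k + k + (k + 1) + 1) (Polynomial.X : ℤ[X]) *
      ((-1) ^ k * padeEval (k + 1) (k + 1) (k + 1 + (k + 1) + k + 1) (1 - Polynomial.X : ℤ[X])) = Polynomial.C d := by
  have e1 := pade (k + 1) (k + 1) k (Polynomial.X : ℤ[X]) (1 - Polynomial.X) (by ring)
  have e2 := pade k k (k + 1) (Polynomial.X : ℤ[X]) (1 - Polynomial.X) (by ring)
  set A := padeEval (k + 1) (k + 1) (k + 1 + (k + 1) + k + 1) (Polynomial.X : ℤ[X]) with hA
  set A' := padeEval k k (k + k + (k + 1) + 1) (Polynomial.X : ℤ[X]) with hA'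
  set B := padeEval (k + 1) (k + 1) (k + 1 + (k + 1) + k + 1) (1 - Polynomial.X : ℤ[X])
  set B' := padeEval k k (k + k + (k + 1) + 1) (1 - Polynomial.X : ℤ[X])
  set E := padeRev (k + 1) k (k + 1 + (k + 1) + k + 1) (Polynomial.X : ℤ[X]) with hE
  set E' := padeRev k (k + 1) (k + k + (k + 1) + 1) (Polynomial.X : ℤ[X]) with hE'
  set Δ := A * ((-1) ^ (k + 1) * B') - A' * ((-1) ^ k * B) with hΔ
  have key : A * E' - A' * E = (1 - Polynomial.X) ^ (2 * k + 2) * Δ := by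
    rw [← e1, ← e2, hΔ]
    rw [show k + 1 + k + 1 = 2 * k + 2 by ring, show k + (k + 1) + 1 = 2 * k + 2 by ring]
    ring
  have hcoef : (A * E' - A' * E).coeff (2 * k + 2) ≠ 0 := by
    rw [Polynomial.coeff_sub]
    have h1 : (A' * E).coeff (2 * k + 2) = 0 := by
      apply coeff_eq_zero_of_natDegree_lt
      refine lt_of_le_of_lt natDegree_mul_le ?_
      have h5 := padeEval_natDegree_le k k (k + k + (k + 1) + 1)
      have h6 := padeRev_natDegree_le (k + 1) k (k + 1 + (k + 1) + k + 1)
      rw [← hA'] at h5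
      rw [← hE] at h6
      omega
    have h2 : (A * E').coeff (2 * k + 2) =
        padeCoeff (k + 1) (k + 1) (k + 1 + (k + 1) + k + 1) (k + 1) *
          padeCoeff k (k + 1) (k + k + (k + 1) + 1) 0 := by
      rw [show 2 * k + 2 = (k + 1) + (k + 1) by ring,
        Polynomial.coeff_mul_add_eq_of_natDegree_le (padeEval_natDegree_le _ _ _) (padeRev_natDegree_le _ _ _),
        padeEval_coeff, padeRev_coeff]
    rw [h1, h2, sub_zero]
    unfold padeCoeff
    have h3 : (k + k + (k + 1) + 1).choose (k + 1) ≠ 0 := (Nat.choose_pos (by omega)).ne'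
    have h4 : (k + 1 + (k + 1)).choose (k + 1) ≠ 0 := (Nat.choose_pos (by omega)).ne'
    simp [h3, h4]
  have hdeg : (A * E' - A' * E).natDegree ≤ 2 * k + 2 := by
    refine (natDegree_sub_le _ _).trans (max_le ?_ ?_)
    · refine natDegree_mul_le.trans ?_
      have h5 := padeEval_natDegree_le (k + 1) (k + 1) (k + 1 + (k + 1) + k + 1)
      have h6 := padeRev_natDegree_le k (k + 1) (k + k + (k + 1) + 1)
      rw [← hA] at h5
      rw [← hE'] at h6
      omega
    · refine natDegree_mul_le.trans ?_
      have h5 := padeEval_natDegree_le k k (k + k + (k + 1) + 1)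
      have h6 := padeRev_natDegree_le (k + 1) k (k + 1 + (k + 1) + k + 1)
      rw [← hA'] at h5
      rw [← hE] at h6
      omega
  have hΔ0 : Δ ≠ 0 := by
    intro h
    rw [key, h, mul_zero] at hcoef
    simp at hcoef
  have h1X : ((1 : ℤ[X]) - Polynomial.X).natDegree = 1 := by
    have : (1 : ℤ[X]) - Polynomial.X = -(Polynomial.X - Polynomial.C 1) := by simp
    rw [this, natDegree_neg, natDegree_X_sub_C]
  have h1X0 : ((1 : ℤ[X]) - Polynomial.X) ≠ 0 := by
    intro h; rw [h] at h1X; simp at h1X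
  have hd0 : Δ.natDegree = 0 := by
    rw [key, natDegree_mul (pow_ne_zero _ h1X0) hΔ0, natDegree_pow, h1X] at hdeg
    omega
  refine ⟨Δ.coeff 0, ?_, eq_C_of_natDegree_eq_zero hd0⟩
  intro h
  apply hΔ0
  rw [eq_C_of_natDegree_eq_zero hd0, h, Polynomial.C_0]

lemma pade_det_field (k : ℕ) {F : Type*} [Field F] [CharZero F] (x y : F) (hxy : x + y = 1) :
    padeEval (k + 1) (k + 1) (k + 1 + (k + 1) + k + 1) x *
      ((-1) ^ (k + 1) * padeEval k k (k + k + (k + 1) + 1) y) ≠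
    padeEval k k (k + k + (k + 1) + 1) x *
      ((-1) ^ k * padeEval (k + 1) (k + 1) (k + 1 + (k + 1) + k + 1) y) := by
  obtain ⟨d, hd, h⟩ := pade_det_poly k
  obtain rfl : y = 1 - x := by rw [← hxy]; ring
  have h := congrArg (Polynomial.eval₂RingHom (Int.castRingHom F) x) h
  simp only [map_mul, map_pow, map_padeEval, map_sub, map_neg, map_one] at h
  rw [Ne, ← sub_eq_zero]
  intro h0
  simp only [coe_eval₂RingHom, Polynomial.eval₂_X, Polynomial.eval₂_C] at h
  rw [h0] at h
  apply hd
  have : (d : F) = 0 := by simpa using h.symm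
  exact_mod_cast this

end PadeDet

section PadeLocal
open Height Height.AdmissibleAbsValues Function
variable {K : Type*} [Field K]

lemma int_poly_arch (v : AbsoluteValue K ℝ) (q n : ℕ) (c : ℕ → ℤ) (e : ℕ → ℕ) (T M : ℝ) (x : K)
    (he : ∀ j < q, e j ≤ n) (hT : ∑ j ∈ Finset.range q, |(c j : ℝ)| ≤ T) (hM : 1 ≤ M)
    (hx : v x ≤ M) : v (∑ j ∈ Finset.range q, (c j : K) * x ^ (e j)) ≤ T * M ^ n := by
  refine (v.sum_le _ _).trans ?_
  refine le_trans ?_ (mul_le_mul_of_nonneg_right hT (by positivity))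
  rw [Finset.sum_mul]
  refine Finset.sum_le_sum fun j hj => ?_
  rw [v.map_mul, v.map_pow]
  have h1 : v (c j : K) ≤ |(c j : ℝ)| := by
    rcases Int.natAbs_eq (c j) with h | h
    · rw [h]
      simpa using v.apply_nat_le_self (c j).natAbs
    · rw [h]
      simpa using v.apply_nat_le_self (c j).natAbs
  have h2 : v x ^ e j ≤ M ^ n :=
    (pow_le_pow_left₀ (v.nonneg _) hx _).trans
      (pow_le_pow_right₀ hM (he j (Finset.mem_range.1 hj)))
  exact mul_le_mul h1 h2 (pow_nonneg (v.nonneg _) _) (abs_nonneg _)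

lemma int_poly_nonarch (v : AbsoluteValue K ℝ) (hv : IsNonarchimedean v)
    (q n : ℕ) (c : ℕ → ℤ) (e : ℕ → ℕ) (M : ℝ) (x : K)
    (he : ∀ j < q, e j ≤ n) (hM : 1 ≤ M)
    (hx : v x ≤ M) : v (∑ j ∈ Finset.range q, (c j : K) * x ^ (e j)) ≤ M ^ n := by
  induction q with
  | zero => simp; positivity
  | succ q ih =>
    rw [Finset.sum_range_succ]
    refine (hv _ _).trans (max_le (ih fun j hj => he j (by omega)) ?_)
    rw [v.map_mul, v.map_pow]
    have h1 : v (c q : K) ≤ 1 := IsNonarchimedean.apply_intCast_le_one hv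
    have h2 : v x ^ e q ≤ M ^ n :=
      (pow_le_pow_left₀ (v.nonneg _) hx _).trans
        (pow_le_pow_right₀ hM (he q (by omega)))
    calc v (c q : K) * v x ^ e q ≤ 1 * M ^ n :=
          mul_le_mul h1 h2 (pow_nonneg (v.nonneg _) _) zero_le_one
      _ = M ^ n := one_mul _

lemma padeCoeff_sum_le_real (p q S T : ℕ) (h : S + (p + q) ≤ T) :
    ∑ j ∈ Finset.range (q + 1), |(padeCoeff p q S j : ℝ)| ≤ (2 : ℝ) ^ T := by
  have h1 := padeCoeff_sum_le p q S
  have h2 : ((∑ j ∈ Finset.range (q + 1), |padeCoeff p q S j| : ℤ) : ℝ) ≤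
    ((2 ^ (S + (p + q)) : ℤ) : ℝ) := by exact_mod_cast h1
  push_cast at h2
  exact h2.trans (pow_le_pow_right₀ (by norm_num) h)

variable [AdmissibleAbsValues K]

/-- Height bound for Padé vectors. -/
lemma pade_height (x y : K) (n T p1 q1 S1 p2 q2 S2 p3 q3 S3 : ℕ) (s : K) (hs : s = 1 ∨ s = -1)
    (a1 : S1 + (p1 + q1) ≤ T) (a2 : S2 + (p2 + q2) ≤ T) (a3 : S3 + (p3 + q3) ≤ T)
    (b1 : q1 ≤ n) (b2 : q2 ≤ n) (b3 : q3 ≤ n) :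
    logHeight ![-padeRev p3 q3 S3 x, padeEval p1 q1 S1 x, s * padeEval p2 q2 S2 y] ≤
      totalWeight K * (T * Real.log 2) + n * logHeight ![1, x, y] := by
  by_cases h0 : ![-padeRev p3 q3 S3 x, padeEval p1 q1 S1 x, s * padeEval p2 q2 S2 y] = 0
  · rw [h0, logHeight_zero]
    have := logHeight_nonneg ![1, x, y]
    have := Real.log_nonneg (x := 2) (by norm_num)
    positivity
  have hy : ![1, x, y] ≠ 0 := by
    intro h
    have := congrFun h 0
    simp at this
  have hvs (v : AbsoluteValue K ℝ) : v s = 1 := by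
    rcases hs with rfl | rfl <;> simp
  have hsup (v : AbsoluteValue K ℝ) (j : Fin 3) : v (![1, x, y] j) ≤ ⨆ j, v (![1, x, y] j) :=
    Finite.le_ciSup_of_le (f := fun j => v (![1, x, y] j)) j le_rfl
  have hM (v : AbsoluteValue K ℝ) : 1 ≤ ⨆ j, v (![1, x, y] j) := by
    simpa using hsup v 0
  have hx (v : AbsoluteValue K ℝ) : v x ≤ ⨆ j, v (![1, x, y] j) := by
    simpa using hsup v 1
  have hy' (v : AbsoluteValue K ℝ) : v y ≤ ⨆ j, v (![1, x, y] j) := by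
    simpa using hsup v 2
  have hm := height_le_local h0 hy n (2 ^ T) (fun v _ i => by
      fin_cases i
      · simp only [Fin.zero_eta, Matrix.cons_val_zero, v.map_neg]
        exact int_poly_arch v _ _ _ _ _ _ _ (fun j hj => by omega)
          (padeCoeff_sum_le_real p3 q3 S3 T a3) (hM v) (hx v)
      · exact int_poly_arch v _ _ _ _ _ _ _ (fun j hj => by omega)
          (padeCoeff_sum_le_real p1 q1 S1 T a1) (hM v) (hx v)
      · show v (s * padeEval p2 q2 S2 y) ≤ _
        rw [v.map_mul, hvs, one_mul]
        exact int_poly_arch v _ _ _ _ _ _ _ (fun j hj => by omega)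
          (padeCoeff_sum_le_real p2 q2 S2 T a2) (hM v) (hy' v))
    (fun v hv i => by
      have hv := isNonarchimedean v hv
      fin_cases i
      · simp only [Fin.zero_eta, Matrix.cons_val_zero, v.map_neg]
        exact int_poly_nonarch v hv _ _ _ _ _ _ (fun j hj => by omega) (hM v) (hx v)
      · exact int_poly_nonarch v hv _ _ _ _ _ _ (fun j hj => by omega) (hM v) (hx v)
      · show v (s * padeEval p2 q2 S2 y) ≤ _
        rw [v.map_mul, hvs, one_mul]
        exact int_poly_nonarch v hv _ _ _ _ _ _ (fun j hj => by omega) (hM v) (hy' v))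
  have := Real.log_le_log (mulHeight_pos _) hm
  rw [Real.log_mul (by positivity) (pow_ne_zero _ (mulHeight_ne_zero _)), Real.log_pow,
    Real.log_pow, Real.log_pow] at this
  simpa only [logHeight_eq_log_mulHeight] using this

end PadeLocal

end UEB


namespace UEB

section Pairs
open Height Height.AdmissibleAbsValues Function
variable {K : Type*} [Field K]

/-- The projective point `(1 : x : y)`. -/
def vec (p : Kˣ × Kˣ) : Fin 3 → K := ![1, (p.1 : K), (p.2 : K)]

lemma vec_ne_zero (p : Kˣ × Kˣ) : vec p ≠ 0 := by
  intro h
  have := congrFun h 0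
  simp [vec] at this

lemma vec_mul (p q : Kˣ × Kˣ) : vec (p * q) = vec p * vec q := by
  ext i; fin_cases i <;> simp [vec]

lemma vec_pow (p : Kˣ × Kˣ) (n : ℕ) : vec (p ^ n) = vec p ^ n := by
  ext i; fin_cases i <;> simp [vec]

/-- Solutions of `x + y = 1`. -/
def IsSol (p : Kˣ × Kˣ) : Prop := (p.1 : K) + (p.2 : K) = 1

variable [AdmissibleAbsValues K]

/-- height of a pair -/
noncomputable def ht (p : Kˣ × Kˣ) : ℝ := logHeight (vec p)

/-- symmetrized height -/
noncomputable def nm (p : Kˣ × Kˣ) : ℝ := ht p + ht p⁻¹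

lemma ht_nonneg (p : Kˣ × Kˣ) : 0 ≤ ht p := logHeight_nonneg _

lemma ht_mul (p q : Kˣ × Kˣ) : ht (p * q) ≤ ht p + ht q := by
  unfold ht
  rw [vec_mul]
  exact logHeight_mul_le _ _

lemma ht_pow (p : Kˣ × Kˣ) (n : ℕ) : ht (p ^ n) = n * ht p := by
  unfold ht
  rw [vec_pow, logHeight_pow]

lemma ht_inv_le (p : Kˣ × Kˣ) : ht p⁻¹ ≤ 2 * ht p := by
  have h1 : vec p⁻¹ = ((p.1 : K) * (p.2 : K))⁻¹ •
      ((fun t : Fin 3 × Fin 3 => vec p t.1 * vec p t.2) ∘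
        (![(1, 2), (0, 2), (0, 1)] : Fin 3 → Fin 3 × Fin 3)) := by
    ext i
    have := p.1.ne_zero
    have := p.2.ne_zero
    fin_cases i <;> simp [vec] <;> field_simp
  unfold ht
  rw [h1, logHeight_smul_eq_logHeight _ (by simp)]
  refine (logHeight_comp_le _ _).trans ?_
  rw [logHeight_fun_mul_eq (vec_ne_zero p) (vec_ne_zero p)]
  linarith

lemma ht_le_nm (p : Kˣ × Kˣ) : ht p ≤ nm p := by
  have := ht_nonneg p⁻¹
  unfold nm; linarith

lemma nm_le (p : Kˣ × Kˣ) : nm p ≤ 3 * ht p := by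
  have := ht_inv_le p
  unfold nm; linarith

lemma nm_inv (p : Kˣ × Kˣ) : nm p⁻¹ = nm p := by
  unfold nm; rw [inv_inv, add_comm]

lemma nm_mul (p q : Kˣ × Kˣ) : nm (p * q) ≤ nm p + nm q := by
  unfold nm
  rw [mul_inv]
  linarith [ht_mul p q, ht_mul p⁻¹ q⁻¹]

lemma nm_pow (p : Kˣ × Kˣ) (n : ℕ) : nm (p ^ n) = n * nm p := by
  unfold nm
  rw [← inv_pow, ht_pow, ht_pow]
  ring

lemma logHeight_sign : logHeight (![-1, 1, 1] : Fin 3 → K) = 0 := by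
  have h : (![-1, 1, 1] : Fin 3 → K) ^ 2 = 1 := by
    ext i; fin_cases i <;> simp
  have h2 := logHeight_pow (![-1, 1, 1] : Fin 3 → K) 2
  rw [h, logHeight_one] at h2
  push_cast at h2
  linarith

lemma logHeight_signed (p : Kˣ × Kˣ) :
    logHeight (![-1, (p.1 : K), (p.2 : K)] : Fin 3 → K) ≤ ht p := by
  have h : (![-1, (p.1 : K), (p.2 : K)] : Fin 3 → K) = ![-1, 1, 1] * vec p := by
    ext i; fin_cases i <;> simp [vec]
  rw [h]
  refine (logHeight_mul_le _ _).trans ?_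
  rw [logHeight_sign, zero_add, ht]

lemma gap_zero_aux {u v : Kˣ × Kˣ} (hu : IsSol u) (hv : IsSol v) (huv : u ≠ v) :
    ht u ≤ totalWeight K * Real.log 2 + ht (v / u) := by
  have h := cross_height (w := vec u) (a := ![-1, 1, 1])
    (b := ![-1, ((v / u).1 : K), ((v / u).2 : K)]) (vec_ne_zero u)
    (by simp [vec]; unfold IsSol at hu; linear_combination hu)
    (by
      simp [vec]
      unfold IsSol at hv; rw [mul_div_cancel₀ _ u.1.ne_zero, mul_div_cancel₀ _ u.2.ne_zero]
      linear_combination hv)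
    (by
      by_contra hcon
      push Not at hcon
      have h1 := hcon 0 1
      have h2 := hcon 0 2
      simp at h1 h2
      apply huv
      have h1' := div_eq_one_iff_eq u.1.ne_zero |>.1 h1
      have h2' := div_eq_one_iff_eq u.2.ne_zero |>.1 h2
      exact Prod.ext (Units.ext h1'.symm) (Units.ext h2'.symm))
  have h1 := logHeight_signed (v / u)
  rw [logHeight_sign] at h
  unfold ht at *
  linarith

lemma gap_zero {u v : Kˣ × Kˣ} (hu : IsSol u) (hv : IsSol v) (huv : u ≠ v) :
    ht u + ht v - 2 * (totalWeight K * Real.log 2) ≤ nm (v / u) := by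
  have h1 := gap_zero_aux hu hv huv
  have h2 := gap_zero_aux hv hu huv.symm
  unfold nm
  rw [inv_div]
  linarith

lemma gap_pade [CharZero K] {u v : Kˣ × Kˣ} (hu : IsSol u) (hv : IsSol v) (n : ℕ) (hn : 1 ≤ n) :
    n * ht u ≤ totalWeight K * (6 * n * Real.log 2) + ht (v / u ^ (2 * n)) := by
  obtain ⟨k, rfl⟩ : ∃ k, n = k + 1 := ⟨n - 1, by omega⟩
  have hu' : (u.1 : K) + (u.2 : K) = 1 := hu
  have e1 := pade (k + 1) (k + 1) k (u.1 : K) (u.2 : K) hu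
  have e2 := pade k k (k + 1) (u.1 : K) (u.2 : K) hu
  have hdet := pade_det_field k (u.1 : K) (u.2 : K) hu
  have hs (j : ℕ) : (-1 : K) ^ j = 1 ∨ (-1 : K) ^ j = -1 := neg_one_pow_eq_or K j
  have hh1 := pade_height (u.1 : K) (u.2 : K) (k + 1) (5 * (k + 1))
    (k + 1) (k + 1) (k + 1 + (k + 1) + k + 1) (k + 1) (k + 1) (k + 1 + (k + 1) + k + 1)
    (k + 1) k (k + 1 + (k + 1) + k + 1) _ (hs k) (by omega) (by omega) (by omega) (by omega)
    (by omega) (by omega)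
  have hh2 := pade_height (u.1 : K) (u.2 : K) (k + 1) (5 * (k + 1))
    k k (k + k + (k + 1) + 1) k k (k + k + (k + 1) + 1)
    k (k + 1) (k + k + (k + 1) + 1) _ (hs (k + 1)) (by omega) (by omega) (by omega) (by omega)
    (by omega) (by omega)
  set A := padeEval (k + 1) (k + 1) (k + 1 + (k + 1) + k + 1) (u.1 : K)
  set A' := padeEval k k (k + k + (k + 1) + 1) (u.1 : K)
  set B := padeEval (k + 1) (k + 1) (k + 1 + (k + 1) + k + 1) (u.2 : K)
  set B' := padeEval k k (k + k + (k + 1) + 1) (u.2 : K)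
  set E := padeRev (k + 1) k (k + 1 + (k + 1) + k + 1) (u.1 : K)
  set E' := padeRev k (k + 1) (k + k + (k + 1) + 1) (u.1 : K)
  rw [show k + 1 + k + 1 = 2 * (k + 1) by ring] at e1
  rw [show k + (k + 1) + 1 = 2 * (k + 1) by ring] at e2
  set m := 2 * (k + 1) with hm
  set z := v / u ^ m with hz
  have hz1 : (u.1 : K) ^ m * (z.1 : K) = v.1 := by
    have : u.1 ^ m * z.1 = v.1 := by rw [hz]; simp
    rw [← this]; simp
  have hz2 : (u.2 : K) ^ m * (z.2 : K) = v.2 := by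
    have : u.2 ^ m * z.2 = v.2 := by rw [hz]; simp
    rw [← this]; simp
  have main : ∀ a : Fin 3 → K, 
      a 0 + (u.1 : K) ^ m * a 1 + (u.2 : K) ^ m * a 2 = 0 → a 1 * (z.2 : K) ≠ a 2 * (z.1 : K) →
      logHeight a ≤ totalWeight K * ((5 * (k + 1) : ℕ) * Real.log 2) +
        ((k + 1 : ℕ) : ℝ) * logHeight ![1, (u.1 : K), (u.2 : K)] →
      ((k + 1 : ℕ) : ℝ) * ht u ≤ totalWeight K * (6 * ((k + 1 : ℕ) : ℝ) * Real.log 2) + ht z := by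
    intro a ha hne hla
    have h := cross_height (w := vec (u ^ m)) (a := a)
      (b := ![-1, (z.1 : K), (z.2 : K)]) (vec_ne_zero _)
      (by simp [vec]; linear_combination ha)
      (by
        simp [vec]
        unfold IsSol at hv
        rw [hz1, hz2]
        linear_combination hv)
      ⟨1, 2, by simpa using hne⟩
    have h1 := logHeight_signed z
    change ht (u ^ m) ≤ _ at h
    rw [ht_pow] at h
    change _ ≤ _ + _ * ht u at hla
    rw [hm] at h
    push_cast at *
    have hl : 0 ≤ (totalWeight K : ℝ) * (k * Real.log 2) := by
      have := Real.log_nonneg (x := 2) (by norm_num)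
      positivity
    nlinarith
  by_cases hc : A * (z.2 : K) = ((-1) ^ k * B) * (z.1 : K)
  · refine main ![-E', A', (-1) ^ (k + 1) * B'] ?_ ?_ hh2
    · simp only [Matrix.cons_val_zero, Matrix.cons_val_one, Matrix.cons_val]
      linear_combination e2
    · simp only [Matrix.cons_val_one, Matrix.cons_val]
      intro hc'
      apply hdet
      have : (z.1 : K) ≠ 0 := z.1.ne_zero
      apply mul_right_cancel₀ this
      linear_combination A' * hc - A * hc'
  · refine main ![-E, A, (-1) ^ k * B] ?_ ?_ hh1
    · simp only [Matrix.cons_val_zero, Matrix.cons_val_one, Matrix.cons_val]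
      linear_combination e1
    · simpa using hc

end Pairs

end UEB


namespace UEB

section Small
open Height Height.AdmissibleAbsValues Function

lemma conj_inv_sub {w : ℂ} {M : ℝ} (hw : w ≠ 0) (h1 : ‖w‖ ≤ M) (h2 : ‖w⁻¹‖ ≤ M) :
    ‖w⁻¹ - (starRingEnd ℂ) w‖ ≤ M - M⁻¹ := by
  have ht : 0 < ‖w‖ := norm_pos_iff.2 hw
  have e : w⁻¹ - (starRingEnd ℂ) w = w⁻¹ * ((1 - ‖w‖ ^ 2 : ℝ) : ℂ) := by
    have : (w * (starRingEnd ℂ) w) = ((‖w‖ ^ 2 : ℝ) : ℂ) := by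
      rw [Complex.mul_conj, Complex.normSq_eq_norm_sq]
    push_cast at *
    rw [← this]
    field_simp
  rw [e, norm_mul, norm_inv, Complex.norm_real, Real.norm_eq_abs]
  rw [norm_inv] at h2
  set t := ‖w‖
  have hM : 0 < M := lt_of_lt_of_le ht h1
  have h3 : M⁻¹ ≤ t := by
    rw [inv_le_comm₀ hM ht]; exact h2
  have h4 : t⁻¹ * |1 - t ^ 2| = |t⁻¹ - t| := by
    rw [← abs_of_pos (inv_pos.2 ht), ← abs_mul, abs_of_pos (inv_pos.2 ht)]
    congr 1
    field_simp
  rw [h4, abs_le]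
  have h5 : M⁻¹ ≤ t⁻¹ := inv_anti₀ ht h1
  constructor <;> linarith

lemma arch_est {a b c d : ℂ} {M N : ℝ} (ha : a ≠ 0) (hb : b ≠ 0) (hc : c ≠ 0) (hd : d ≠ 0)
    (hM : 1 ≤ M) (hN : 1 ≤ N)
    (a1 : ‖a‖ ≤ M) (a2 : ‖a⁻¹‖ ≤ M) (b1 : ‖b‖ ≤ M) (b2 : ‖b⁻¹‖ ≤ M)
    (c1 : ‖c‖ ≤ N) (c2 : ‖c⁻¹‖ ≤ N) (d1 : ‖d‖ ≤ N) (d2 : ‖d⁻¹‖ ≤ N)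
    (h : (a - 1) * (d - 1) - (c - 1) * (b - 1) = 0) :
    ‖(a⁻¹ - 1) * (d⁻¹ - 1) - (c⁻¹ - 1) * (b⁻¹ - 1)‖ ≤ 4 * (M * N - (M * N)⁻¹) := by
  have hM0 : 0 < M := by linarith
  have hN0 : 0 < N := by linarith
  have e : (a⁻¹ - 1) * (d⁻¹ - 1) - (c⁻¹ - 1) * (b⁻¹ - 1) =
      ((a * d)⁻¹ - (starRingEnd ℂ) (a * d)) - ((c * b)⁻¹ - (starRingEnd ℂ) (c * b))
      - (a⁻¹ - (starRingEnd ℂ) a) - (d⁻¹ - (starRingEnd ℂ) d)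
      + (c⁻¹ - (starRingEnd ℂ) c) + (b⁻¹ - (starRingEnd ℂ) b) := by
    have h' := congrArg (starRingEnd ℂ) h
    simp only [map_sub, map_mul, map_one, map_zero] at h'
    simp only [map_mul, mul_inv]
    linear_combination h'
  have k1 := conj_inv_sub (w := a * d) (M := M * N) (mul_ne_zero ha hd)
    (by rw [norm_mul]; gcongr) (by rw [mul_inv, norm_mul]; gcongr)
  have k2 := conj_inv_sub (w := c * b) (M := M * N) (mul_ne_zero hc hb)
    (by rw [norm_mul, mul_comm]; gcongr) (by rw [mul_inv, norm_mul, mul_comm]; gcongr)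
  have k3 := conj_inv_sub ha a1 a2
  have k4 := conj_inv_sub hb b1 b2
  have k5 := conj_inv_sub hc c1 c2
  have k6 := conj_inv_sub hd d1 d2
  have k7 : M - M⁻¹ + (N - N⁻¹) ≤ M * N - (M * N)⁻¹ := by
    have : M * N - (M * N)⁻¹ - (M - M⁻¹ + (N - N⁻¹)) =
      (M - 1) * (N - 1) * (1 - (M * N)⁻¹) := by
      field_simp
      ring
    have h8 : (M * N)⁻¹ ≤ 1 := inv_le_one_of_one_le₀ (one_le_mul_of_one_le_of_one_le hM hN)
    have : 0 ≤ (M - 1) * (N - 1) * (1 - (M * N)⁻¹) :=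
      mul_nonneg (mul_nonneg (by linarith) (by linarith)) (by linarith)
    linarith
  rw [e]
  refine (norm_add_le _ _).trans ?_
  refine (add_le_add_left (norm_add_le _ _) _).trans ?_
  refine (add_le_add_left (add_le_add_left (norm_sub_le _ _) _) _).trans ?_
  refine (add_le_add_left (add_le_add_left (add_le_add_left (norm_sub_le _ _) _) _) _).trans ?_
  refine (add_le_add_left (add_le_add_left (add_le_add_left (add_le_add_left
    (norm_sub_le _ _) _) _) _) _).trans ?_
  linarith

lemma exp_est {M : ℝ} (hM : 1 ≤ M) : 4 * (M - M⁻¹) ≤ Real.exp (-1) * M ^ 9 := by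
  have hM0 : 0 < M := by linarith
  set n := Real.log M with hn
  have hMe : M = Real.exp n := (Real.exp_log hM0).symm
  have hn0 : 0 ≤ n := Real.log_nonneg hM
  have h1 : M - M⁻¹ ≤ 2 * n * M := by
    have h2 : 1 - 2 * n ≤ Real.exp (-(2 * n)) := by
      have := Real.add_one_le_exp (-(2 * n)); linarith
    have h3 : M⁻¹ = Real.exp (-(2 * n)) * M := by
      rw [hMe, ← Real.exp_neg, ← Real.exp_add]; congr 1; ring
    rw [h3]
    nlinarith
  have h4 : 8 * n ≤ Real.exp (-1) * M ^ 8 := by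
    have h5 : Real.exp (-1) * M ^ 8 = Real.exp (8 * n - 1) := by
      rw [hMe, ← Real.exp_nat_mul, ← Real.exp_add]; congr 1; push_cast; ring
    rw [h5]
    have := Real.add_one_le_exp (8 * n - 1)
    linarith
  calc 4 * (M - M⁻¹) ≤ 4 * (2 * n * M) := by linarith
    _ = 8 * n * M := by ring
    _ ≤ Real.exp (-1) * M ^ 8 * M := by gcongr
    _ = _ := by ring

variable {K : Type*} [Field K]

/-- The table of `p i / p j`. -/
def tab (p : Kˣ × Kˣ) : Fin 3 × Fin 3 → K := fun t => vec p t.1 * vec p⁻¹ t.2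

lemma tab_sup (p : Kˣ × Kˣ) (v : AbsoluteValue K ℝ) :
    1 ≤ (⨆ t, v (tab p t)) ∧ v (p.1 : K) ≤ (⨆ t, v (tab p t)) ∧ v (p.2 : K) ≤ (⨆ t, v (tab p t)) ∧
    v (p.1 : K)⁻¹ ≤ (⨆ t, v (tab p t)) ∧ v (p.2 : K)⁻¹ ≤ (⨆ t, v (tab p t)) := by
  have h (t) : v (tab p t) ≤ ⨆ t, v (tab p t) :=
    Finite.le_ciSup_of_le (f := fun t => v (tab p t)) t le_rfl
  refine ⟨?_, ?_, ?_, ?_, ?_⟩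
  · simpa [tab, vec] using h (0, 0)
  · simpa [tab, vec] using h (1, 0)
  · simpa [tab, vec] using h (2, 0)
  · simpa [tab, vec] using h (0, 1)
  · simpa [tab, vec] using h (0, 2)

lemma nonarch_est (v : AbsoluteValue K ℝ) (hv : IsNonarchimedean v) {a b c d : K} {M N : ℝ}
    (hM : 1 ≤ M) (hN : 1 ≤ N)
    (a2 : v a⁻¹ ≤ M) (b2 : v b⁻¹ ≤ M) (c2 : v c⁻¹ ≤ N) (d2 : v d⁻¹ ≤ N) :
    v ((a⁻¹ - 1) * (d⁻¹ - 1) - (c⁻¹ - 1) * (b⁻¹ - 1)) ≤ M * N := by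
  have hs (x y : K) : v (x - y) ≤ max (v x) (v y) := by
    have := hv x (-y)
    rwa [v.map_neg, ← sub_eq_add_neg] at this
  have h1 (x : K) (T : ℝ) (hT : 1 ≤ T) (hx : v x ≤ T) : v (x - 1) ≤ T :=
    (hs _ _).trans (max_le hx (by simpa using hT))
  refine (hs _ _).trans (max_le ?_ ?_)
  · rw [v.map_mul]
    exact mul_le_mul (h1 _ _ hM a2) (h1 _ _ hN d2) (v.nonneg _) (by linarith)
  · rw [v.map_mul, mul_comm]
    exact mul_le_mul (h1 _ _ hM b2) (h1 _ _ hN c2) (v.nonneg _) (by linarith)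

lemma small [NumberField K] {p q s : Kˣ × Kˣ} (hp : IsSol p) (hq : IsSol q) (hs : IsSol s)
    (hpq : p ≠ q) (hps : p ≠ s) (hqs : q ≠ s) :
    (totalWeight K : ℝ) ≤ 9 * (nm (q / p) + nm (s / p)) := by
  unfold IsSol at hp hq hs
  have hne : ∀ {u v : Kˣ × Kˣ}, (u.1 : K) + u.2 = 1 → (v.1 : K) + v.2 = 1 → u ≠ v →
      (u.1 : K) ≠ v.1 := by
    intro u v hu hv huv h
    apply huv
    refine Prod.ext (Units.ext h) (Units.ext ?_)
    linear_combination hu - hv - h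
  have x12 := hne hp hq hpq
  have x13 := hne hp hs hps
  have x23 := hne hq hs hqs
  have p1 := p.1.ne_zero
  have p2 := p.2.ne_zero
  have q1 := q.1.ne_zero
  have q2 := q.2.ne_zero
  have s1 := s.1.ne_zero
  have s2 := s.2.ne_zero
  set a : K := ((q / p).1 : K) with ha
  set b : K := ((q / p).2 : K) with hb
  set c : K := ((s / p).1 : K) with hc
  set d : K := ((s / p).2 : K) with hd
  have ha' : a = (q.1 : K) / p.1 := by simp [ha]
  have hb' : b = (q.2 : K) / p.2 := by simp [hb]
  have hc' : c = (s.1 : K) / p.1 := by simp [hc]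
  have hd' : d = (s.2 : K) / p.2 := by simp [hd]
  have yp : (p.2 : K) = 1 - p.1 := by linear_combination hp
  have yq : (q.2 : K) = 1 - q.1 := by linear_combination hq
  have ys : (s.2 : K) = 1 - s.1 := by linear_combination hs
  have hD : (a - 1) * (d - 1) - (c - 1) * (b - 1) = 0 := by
    rw [ha', hb', hc', hd']
    field_simp
    rw [yp, yq, ys]
    ring
  set E := (a⁻¹ - 1) * (d⁻¹ - 1) - (c⁻¹ - 1) * (b⁻¹ - 1) with hE
  have hE0 : E ≠ 0 := by
    have : E * ((q.1 : K) * q.2 * s.1 * s.2) =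
        ((p.1 : K) - q.1) * (s.1 - p.1) * (s.1 - q.1) := by
      rw [hE, ha', hb', hc', hd']
      field_simp
      rw [yp, yq, ys]
      ring
    intro h0
    rw [h0, zero_mul] at this
    have h3 := mul_ne_zero (mul_ne_zero (sub_ne_zero.2 x12) (sub_ne_zero.2 x13.symm))
      (sub_ne_zero.2 x23.symm)
    exact h3 this.symm
  have t1 : tab (q / p) ≠ 0 := tensor_ne_zero (vec_ne_zero _) (vec_ne_zero _)
  have t2 : tab (s / p) ≠ 0 := tensor_ne_zero (vec_ne_zero _) (vec_ne_zero _)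
  have hsup (v : AbsoluteValue K ℝ) :
      (⨆ t : (Fin 3 × Fin 3) × (Fin 3 × Fin 3), v (tab (q / p) t.1 * tab (s / p) t.2)) =
      (⨆ t, v (tab (q / p) t)) * ⨆ t, v (tab (s / p) t) :=
    Real.iSup_fun_mul_eq_iSup_mul_iSup_of_nonneg v _ _
  have hEv : (fun _ : Fin 1 => E) ≠ 0 := ne_iff.2 ⟨0, hE0⟩
  have hm := height_le_local hEv (tensor_ne_zero t1 t2) 9 (Real.exp (-1)) (fun v hv _ => by
      rw [hsup]
      obtain ⟨m1, m2, m3, m4, m5⟩ := tab_sup (q / p) v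
      obtain ⟨n1, n2, n3, n4, n5⟩ := tab_sup (s / p) v
      have hv' : IsInfinitePlace v := NumberField.mem_multisetInfinitePlace.1 hv
      obtain ⟨φ, hφ⟩ := hv'
      have hφ' (x : K) : v x = ‖φ x‖ := by rw [← hφ]; rfl
      refine le_trans ?_ (exp_est (one_le_mul_of_one_le_of_one_le m1 n1))
      simp only [hφ'] at *
      have hφ0 {x : K} (hx : x ≠ 0) : φ x ≠ 0 := (map_ne_zero φ).2 hx
      simp only [map_inv₀] at m4 m5 n4 n5
      have := arch_est (hφ0 (q / p).1.ne_zero) (hφ0 (q / p).2.ne_zero) (hφ0 (s / p).1.ne_zero)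
        (hφ0 (s / p).2.ne_zero) m1 n1 m2 m4 m3 m5 n2 n4 n3 n5
        (by rw [← ha, ← hb, ← hc, ← hd]; simpa using congrArg φ hD)
      rw [hE]
      simp only [map_sub, map_mul, map_inv₀, map_one]
      exact this)
    (fun v hv _ => by
      rw [hsup]
      obtain ⟨m1, m2, m3, m4, m5⟩ := tab_sup (q / p) v
      obtain ⟨n1, n2, n3, n4, n5⟩ := tab_sup (s / p) v
      refine (nonarch_est v (isNonarchimedean v hv) m1 n1 m4 m5 n4 n5).trans ?_
      exact le_self_pow₀ (one_le_mul_of_one_le_of_one_le m1 n1) (by norm_num))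
  rw [mulHeight_eq_one_of_subsingleton] at hm
  have hl := Real.log_le_log one_pos hm
  rw [Real.log_one, Real.log_mul (by positivity) (pow_ne_zero _ (mulHeight_ne_zero _)),
    Real.log_pow, Real.log_pow, Real.log_exp, ← logHeight_eq_log_mulHeight,
    logHeight_fun_mul_eq t1 t2] at hl
  have e1 : logHeight (tab (q / p)) = nm (q / p) :=
    logHeight_fun_mul_eq (vec_ne_zero _) (vec_ne_zero _)
  have e2 : logHeight (tab (s / p)) = nm (s / p) :=
    logHeight_fun_mul_eq (vec_ne_zero _) (vec_ne_zero _)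
  rw [e1, e2] at hl
  push_cast at hl
  linarith

end Small

end UEB


namespace UEB

section Large
open Height Height.AdmissibleAbsValues Function
variable {K : Type*} [Field K] [NumberField K]

lemma t_range {t : ℝ} (ht0 : 0 < t) (h1 : t ≤ 0.516)
    (h : ∀ n : ℕ, 1 ≤ n → n * t ≤ 0.3575 ∨ 0.6366 ≤ n * t) : 0.318 ≤ t ∧ t ≤ 0.3575 := by
  have a1 := h 1 le_rfl
  have a2 := h 2 (by norm_num)
  push_cast at a1 a2
  have b1 : t ≤ 0.3575 := by rcases a1 with a | a <;> linarith
  refine ⟨?_, b1⟩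
  rcases a2 with a | a
  · exfalso
    have c1 := Nat.lt_floor_add_one (0.36 / t)
    have c2 := Nat.floor_le (a := 0.36 / t) (by positivity)
    rw [div_lt_iff₀ ht0] at c1
    rw [le_div_iff₀ ht0] at c2
    have c3 := h (⌊0.36 / t⌋₊ + 1) (by omega)
    push_cast at c3
    rcases c3 with c | c <;> linarith
  · linarith

lemma D_pos : (0 : ℝ) < totalWeight K := by exact_mod_cast NumberField.totalWeight_pos K

lemma large_gap {u v : Kˣ × Kˣ} (hu : IsSol u) (hv : IsSol v)
    (hu1 : 67 * (totalWeight K : ℝ) ≤ ht u) {X : ℝ} (nu nv : ℕ)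
    (bu1 : 0.9999 * X ≤ nu * ht u) (bu2 : nu * ht u ≤ X)
    (he : nm (v ^ nv / u ^ nu) ≤ X / 20) (n : ℕ) (hn : 1 ≤ n) :
    n * (nv * ht u) ≤ 0.3575 * X ∨ 0.6366 * X ≤ n * (nv * ht u) := by
  have hg := gap_pade hu hv n hn
  have hD := D_pos (K := K)
  have hlog := Real.log_two_lt_d9
  have hhu := ht_nonneg u
  have hn0 : (0 : ℝ) ≤ n := by positivity
  have hnv0 : (0 : ℝ) ≤ nv := by positivity
  have hX : 0 ≤ X := by
    have : 0 ≤ nu * ht u := by positivity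
    linarith
  have hc : (totalWeight K : ℝ) * (6 * n * Real.log 2) ≤ n * ht u / 16 := by
    have h1 : (totalWeight K : ℝ) * (6 * Real.log 2) ≤ ht u / 16 := by nlinarith
    have h2 := mul_le_mul_of_nonneg_left h1 hn0
    linarith
  have h1 : 15 / 16 * (n * ht u) ≤ ht (v / u ^ (2 * n)) := by linarith
  have h2 : 15 / 16 * (n * (nv * ht u)) ≤ ht ((v / u ^ (2 * n)) ^ nv) := by
    rw [ht_pow]
    have := mul_le_mul_of_nonneg_left h1 hnv0
    linarith
  have he' := ht_le_nm (v ^ nv / u ^ nu)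
  rcases le_total (2 * n * nv) nu with hk | hk
  · left
    obtain ⟨k, hk⟩ := Nat.exists_eq_add_of_le hk
    have e : (v / u ^ (2 * n)) ^ nv = (v ^ nv / u ^ nu) * u ^ k := by
      rw [hk, div_pow, ← pow_mul, pow_add, ← div_div, div_mul_cancel]
    rw [e] at h2
    have h3 := ht_mul (v ^ nv / u ^ nu) (u ^ k)
    rw [ht_pow] at h3
    have h4 : (nu : ℝ) = 2 * n * nv + k := by exact_mod_cast hk
    have h5 : (nu : ℝ) * ht u = 2 * (n * (nv * ht u)) + k * ht u := by rw [h4]; ring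
    linarith
  · right
    obtain ⟨k, hk⟩ := Nat.exists_eq_add_of_le hk
    have e : (v / u ^ (2 * n)) ^ nv = (v ^ nv / u ^ nu) * (u⁻¹) ^ k := by
      rw [div_pow, ← pow_mul, hk, pow_add, ← div_div, inv_pow, div_eq_mul_inv (v ^ nv / u ^ nu)]
    rw [e] at h2
    have h3 := ht_mul (v ^ nv / u ^ nu) ((u⁻¹) ^ k)
    rw [ht_pow] at h3
    have h4 : (2 * n * nv : ℝ) = nu + k := by exact_mod_cast hk
    have h5 : 2 * (n * (nv * ht u)) = (nu : ℝ) * ht u + k * ht u := by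
      rw [← add_mul, ← h4]; ring
    have h6 := mul_le_mul_of_nonneg_left (ht_inv_le u) (show (0 : ℝ) ≤ k by positivity)
    linarith

lemma large_zero {u v : Kˣ × Kˣ} (hu : IsSol u) (hv : IsSol v) (huv : u ≠ v)
    (hu1 : 67 * (totalWeight K : ℝ) ≤ ht u) {X : ℝ} (nu nv : ℕ) (hnn : nv ≤ nu)
    (bu2 : nu * ht u ≤ X) (bv1 : 0.9999 * X ≤ nv * ht v) 
    (he : nm (v ^ nv / u ^ nu) ≤ X / 20) : nv * ht u ≤ 0.516 * X := by
  have hg := gap_zero hu hv huv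
  have hD := D_pos (K := K)
  have hlog := Real.log_two_lt_d9
  have hhu := ht_nonneg u
  have hnv0 : (0 : ℝ) ≤ nv := by positivity
  have hX : 0 ≤ X := by
    have : 0 ≤ nu * ht u := by positivity
    linarith
  obtain ⟨k, hk⟩ := Nat.exists_eq_add_of_le hnn
  have hc : 2 * ((totalWeight K : ℝ) * Real.log 2) ≤ 0.0208 * ht u := by nlinarith
  have h1 : 0.9792 * ht u + ht v ≤ nm (v / u) := by linarith
  have h2 : nv * (0.9792 * ht u + ht v) ≤ nm ((v / u) ^ nv) := by
    rw [nm_pow]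
    exact mul_le_mul_of_nonneg_left h1 hnv0
  have e : (v / u) ^ nv = (v ^ nv / u ^ nu) * u ^ k := by
    rw [hk, div_pow, pow_add, ← div_div, div_mul_cancel]
  rw [e] at h2
  have h3 := nm_mul (v ^ nv / u ^ nu) (u ^ k)
  rw [nm_pow] at h3
  have h6 := mul_le_mul_of_nonneg_left (nm_le u) (show (0 : ℝ) ≤ k by positivity)
  have h4 : (nu : ℝ) = nv + k := by exact_mod_cast hk
  have h5 : (nu : ℝ) * ht u = nv * ht u + k * ht u := by rw [h4]; ring
  linarith

lemma large_pair {u v : Kˣ × Kˣ} (hu : IsSol u) (hv : IsSol v) (huv : u ≠ v)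
    (hu1 : 67 * (totalWeight K : ℝ) ≤ ht u) {X : ℝ} (hX : 0 < X) (nu nv : ℕ) (hnn : nv ≤ nu)
    (hnv : 0 < nv)
    (bu1 : 0.9999 * X ≤ nu * ht u) (bu2 : nu * ht u ≤ X) (bv1 : 0.9999 * X ≤ nv * ht v)
    (he : nm (v ^ nv / u ^ nu) ≤ X / 20) :
    0.318 * X ≤ nv * ht u ∧ nv * ht u ≤ 0.3575 * X := by
  have hD := D_pos (K := K)
  have hhu : 0 < ht u := by linarith
  have hnv' : (0 : ℝ) < nv := by exact_mod_cast hnv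
  have := t_range (t := nv * ht u / X) (by positivity)
    (by rw [div_le_iff₀ hX]; exact large_zero hu hv huv hu1 nu nv hnn bu2 bv1 he)
    (fun n hn => by
      rw [← mul_div_assoc, div_le_iff₀ hX, le_div_iff₀ hX]
      exact large_gap hu hv hu1 nu nv bu1 bu2 he n hn)
  rwa [le_div_iff₀ hX, div_le_iff₀ hX] at this

lemma large_three {s : Set (Kˣ × Kˣ)} {X : ℝ} (hX : 0 < X) (nf : Kˣ × Kˣ → ℕ)
    (hsol : ∀ u ∈ s, IsSol u) (hl : ∀ u ∈ s, 67 * (totalWeight K : ℝ) ≤ ht u)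
    (hpos : ∀ u ∈ s, 0 < nf u)
    (hmono : ∀ u ∈ s, ∀ v ∈ s, ht u ≤ ht v → nf v ≤ nf u)
    (b1 : ∀ u ∈ s, 0.9999 * X ≤ nf u * ht u) (b2 : ∀ u ∈ s, nf u * ht u ≤ X)
    {u v w : Kˣ × Kˣ} (hu : u ∈ s) (hv : v ∈ s) (hw : w ∈ s)
    (huv : u ≠ v) (huw : u ≠ w) (hvw : v ≠ w)
    (e1 : nm (v ^ nf v / u ^ nf u) ≤ X / 20) (e2 : nm (w ^ nf w / u ^ nf u) ≤ X / 20)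
    (e3 : nm (w ^ nf w / v ^ nf v) ≤ X / 20) (o1 : ht u ≤ ht v) (o2 : ht v ≤ ht w) : False := by
  have k1 := large_pair (hsol u hu) (hsol v hv) huv (hl u hu) hX _ _ (hmono u hu v hv o1)
    (hpos v hv) (b1 u hu) (b2 u hu) (b1 v hv) e1
  have k2 := large_pair (hsol u hu) (hsol w hw) huw (hl u hu) hX _ _
    (hmono u hu w hw (o1.trans o2))
    (hpos w hw) (b1 u hu) (b2 u hu) (b1 w hw) e2
  have k3 := large_pair (hsol v hv) (hsol w hw) hvw (hl v hv) hX _ _ (hmono v hv w hw o2)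
    (hpos w hw) (b1 v hv) (b2 v hv) (b1 w hw) e3
  have m1 : ((nf v : ℝ) * ht u) * (nf w * ht v) ≤ (0.3575 * X) * (0.3575 * X) := by
    refine mul_le_mul k1.2 k3.2 ?_ (by positivity)
    have := ht_nonneg v
    positivity
  have m2 : (0.9999 * X) * (0.318 * X) ≤ ((nf v : ℝ) * ht v) * (nf w * ht u) := by
    refine mul_le_mul (b1 v hv) k2.1 (by positivity) ?_
    have := ht_nonneg v
    positivity
  have : ((nf v : ℝ) * ht v) * (nf w * ht u) = ((nf v : ℝ) * ht u) * (nf w * ht v) := by ring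
  have hXX : 0 < X * X := by positivity
  nlinarith

end Large

section Count
open Height Height.AdmissibleAbsValues Function
variable {K : Type*} [Field K] [NumberField K]

/-- pull back the norm to an abstract group -/
noncomputable def pn {A : Type*} [AddCommGroup A] (ψ : A →+ Additive (Kˣ × Kˣ)) (z : A) : ℝ :=
  nm (Additive.toMul (ψ z))

lemma pn_gnorm {A : Type*} [AddCommGroup A] (ψ : A →+ Additive (Kˣ × Kˣ)) :
    GNorm (pn ψ) where
  add x y := by unfold pn; rw [map_add, toMul_add]; exact nm_mul _ _
  neg x := by unfold pn; rw [map_neg, toMul_neg, nm_inv]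
  smul n x := by unfold pn; rw [map_nsmul, toMul_nsmul, nm_pow]

variable {A : Type*} [AddCommGroup A] (ψ : A →+ Additive (Kˣ × Kˣ))
  {W : Type*} [AddCommGroup W] [Module ℚ W] [Module.Finite ℚ W] (φ : A →+ W)

lemma count_small (hφ : ∀ z, φ z = 0 → pn ψ z = 0)
    (s : Finset (Kˣ × Kˣ)) (hs : ∀ u ∈ s, IsSol u) (g : Kˣ × Kˣ → A)
    (hg : ∀ u ∈ s, ψ (g u) = Additive.ofMul u)
    (hh : ∀ u ∈ s, ht u ≤ 2.2 * totalWeight K) :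
    s.card ≤ 2 * 242 ^ Module.finrank ℚ W := by
  have hD := D_pos (K := K)
  refine packing_two (pn_gnorm ψ) φ hφ s g 242 (by norm_num)
    (B := 6.6 * totalWeight K) (δ := totalWeight K / 18) (by positivity) ?_ ?_ ?_
  · intro u hu
    have h1 := nm_le u
    have h2 := hh u hu
    unfold pn
    rw [hg u hu, toMul_ofMul]
    linarith
  · push_cast
    linarith
  · intro x hx y hy z hz hxy hxz hyz h1 h2
    unfold pn at h1 h2
    rw [map_sub, hg x hx, hg y hy, toMul_sub, toMul_ofMul, toMul_ofMul] at h1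
    rw [map_sub, hg x hx, hg z hz, toMul_sub, toMul_ofMul, toMul_ofMul] at h2
    have := small (hs x hx) (hs y hy) (hs z hz) hxy hxz hyz
    linarith

lemma count_medium (hφ : ∀ z, φ z = 0 → pn ψ z = 0)
    (s : Finset (Kˣ × Kˣ)) (hs : ∀ u ∈ s, IsSol u) (g : Kˣ × Kˣ → A)
    (hg : ∀ u ∈ s, ψ (g u) = Additive.ofMul u)
    (hh : ∀ u ∈ s, 2.2 * totalWeight K ≤ ht u)
    (hh2 : ∀ u ∈ s, ht u ≤ 67 * totalWeight K) :
    s.card ≤ 242 ^ Module.finrank ℚ W := by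
  have hD := D_pos (K := K)
  have hlog := Real.log_two_lt_d9
  rw [← Fintype.card_coe]
  refine packing (pn_gnorm ψ) φ hφ (fun u : s => g u) 242 (by norm_num)
    (B := 201 * totalWeight K) (δ := 3 * totalWeight K) (by positivity) ?_ ?_ ?_
  · rintro ⟨u, hu⟩
    have h1 := nm_le u
    have h2 := hh2 u hu
    unfold pn
    rw [hg u hu, toMul_ofMul]
    linarith
  · rintro ⟨u, hu⟩ ⟨v, hv⟩ huv
    have huv' : v ≠ u := fun h => huv (Subtype.ext h.symm)
    have := gap_zero (hs v hv) (hs u hu) huv'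
    unfold pn
    rw [map_sub, hg u hu, hg v hv, toMul_sub, toMul_ofMul, toMul_ofMul]
    have h1 := hh u hu
    have h2 := hh v hv
    nlinarith
  · push_cast
    linarith

lemma count_large (hφ : ∀ z, φ z = 0 → pn ψ z = 0)
    (s : Finset (Kˣ × Kˣ)) (hs : ∀ u ∈ s, IsSol u) (g : Kˣ × Kˣ → A)
    (hg : ∀ u ∈ s, ψ (g u) = Additive.ofMul u)
    (hh : ∀ u ∈ s, 67 * totalWeight K ≤ ht u) :
    s.card ≤ 2 * 242 ^ Module.finrank ℚ W := by
  have hD := D_pos (K := K)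
  obtain ⟨X, hX, hXs⟩ : ∃ X : ℝ, 0 < X ∧ ∀ u ∈ s, 10000 * ht u ≤ X := by
    refine ⟨1 + ∑ u ∈ s, 10000 * ht u, ?_, ?_⟩
    · have : 0 ≤ ∑ u ∈ s, 10000 * ht u :=
        Finset.sum_nonneg fun u _ => mul_nonneg (by norm_num) (ht_nonneg u)
      linarith
    · intro u hu
      have := Finset.single_le_sum (f := fun u => 10000 * ht u)
        (fun u _ => mul_nonneg (by norm_num) (ht_nonneg u)) hu
      linarith
  let nf : Kˣ × Kˣ → ℕ := fun u => ⌊X / ht u⌋₊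
  have hp : ∀ u ∈ s, 0 < ht u := fun u hu => by linarith [hh u hu]
  have b2 : ∀ u ∈ s, nf u * ht u ≤ X := by
    intro u hu
    have := Nat.floor_le (a := X / ht u) (div_nonneg hX.le (hp u hu).le)
    rwa [le_div_iff₀ (hp u hu)] at this
  have b1 : ∀ u ∈ s, 0.9999 * X ≤ nf u * ht u := by
    intro u hu
    have := Nat.lt_floor_add_one (X / ht u)
    rw [div_lt_iff₀ (hp u hu)] at this
    have h2 := hXs u hu
    change _ < ((nf u : ℝ) + 1) * _ at this
    linarith
  have hpos : ∀ u ∈ s, 0 < nf u := by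
    intro u hu
    rcases Nat.eq_zero_or_pos (nf u) with h | h
    · have := b1 u hu
      rw [h] at this
      simp at this
      linarith
    · exact h
  have hmono : ∀ u ∈ s, ∀ v ∈ s, ht u ≤ ht v → nf v ≤ nf u := by
    intro u hu v hv h
    apply Nat.floor_le_floor
    exact div_le_div_of_nonneg_left hX.le (hp u hu) h
  have hdist : ∀ u ∈ s, ∀ v ∈ s,
      pn ψ (nf v • g v - nf u • g u) = nm (v ^ nf v / u ^ nf u) := by
    intro u hu v hv
    unfold pn
    rw [map_sub, map_nsmul, map_nsmul, hg u hu, hg v hv, toMul_sub, toMul_nsmul, toMul_nsmul,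
      toMul_ofMul, toMul_ofMul]
  refine packing_two (pn_gnorm ψ) φ hφ s (fun u => nf u • g u) 242 (by norm_num)
    (B := 3 * X) (δ := X / 40) (by positivity) ?_ ?_ ?_
  · intro u hu
    rw [(pn_gnorm ψ).smul]
    have h1 := nm_le u
    have h2 := b2 u hu
    have h3 := mul_le_mul_of_nonneg_left h1 (show (0 : ℝ) ≤ nf u by positivity)
    unfold pn
    rw [hg u hu, toMul_ofMul]
    linarith
  · push_cast
    linarith
  · intro x hx y hy z hz hxy hxz hyz h1 h2
    have h3 : pn ψ (nf z • g z - nf y • g y) ≤ X / 20 := by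
      have := (pn_gnorm ψ).sub_le (nf z • g z - nf x • g x) (nf y • g y - nf x • g x)
      rw [sub_sub_sub_cancel_right] at this
      linarith
    rw [hdist x hx y hy] at h1
    rw [hdist x hx z hz] at h2
    rw [hdist y hy z hz] at h3
    have sym : ∀ a b : Kˣ × Kˣ, nm (a / b) ≤ X / 20 → nm (b / a) ≤ X / 20 := by
      intro a b h
      rwa [← nm_inv, inv_div]
    have h1 : nm (y ^ nf y / x ^ nf x) ≤ X / 20 := by linarith
    have h2 : nm (z ^ nf z / x ^ nf x) ≤ X / 20 := by linarith
    have L := @large_three K _ _ (s : Set (Kˣ × Kˣ)) X hX nf hs hh hpos hmono b1 b2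
    rcases le_total (ht x) (ht y) with o1 | o1 <;> rcases le_total (ht y) (ht z) with o2 | o2 <;>
      rcases le_total (ht x) (ht z) with o3 | o3
    · exact L hx hy hz hxy hxz hyz h1 h2 h3 o1 o2
    · exact L hx hy hz hxy hxz hyz h1 h2 h3 o1 o2
    · exact L hx hz hy hxz hxy hyz.symm h2 h1 (sym _ _ h3) o3 o2
    · exact L hz hx hy hxz.symm hyz.symm hxy (sym _ _ h2) (sym _ _ h3) h1 o3 o1
    · exact L hy hx hz hxy.symm hyz hxz (sym _ _ h1) h3 h2 o1 o3
    · exact L hy hz hx hyz hxy.symm hxz.symm h3 (sym _ _ h1) (sym _ _ h2) o2 o3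
    · exact L hz hy hx hyz.symm hxz.symm hxy.symm (sym _ _ h3) (sym _ _ h2) (sym _ _ h1) o2 o1
    · exact L hz hy hx hyz.symm hxz.symm hxy.symm (sym _ _ h3) (sym _ _ h2) (sym _ _ h1) o2 o1

lemma count_all (hφ : ∀ z, φ z = 0 → pn ψ z = 0)
    (s : Finset (Kˣ × Kˣ)) (hs : ∀ u ∈ s, IsSol u) (g : Kˣ × Kˣ → A)
    (hg : ∀ u ∈ s, ψ (g u) = Additive.ofMul u) : s.card ≤ 5 * 242 ^ Module.finrank ℚ W := by
  let s1 := s.filter fun u => ht u ≤ 2.2 * totalWeight K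
  let s2 := s.filter fun u => 2.2 * totalWeight K ≤ ht u ∧ ht u ≤ 67 * totalWeight K
  let s3 := s.filter fun u => 67 * totalWeight K ≤ ht u
  have h1 := count_small ψ φ hφ s1 (fun u hu => hs u (Finset.mem_filter.1 hu).1) g
    (fun u hu => hg u (Finset.mem_filter.1 hu).1) (fun u hu => (Finset.mem_filter.1 hu).2)
  have h2 := count_medium ψ φ hφ s2 (fun u hu => hs u (Finset.mem_filter.1 hu).1) g
    (fun u hu => hg u (Finset.mem_filter.1 hu).1) (fun u hu => (Finset.mem_filter.1 hu).2.1)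
    (fun u hu => (Finset.mem_filter.1 hu).2.2)
  have h3 := count_large ψ φ hφ s3 (fun u hu => hs u (Finset.mem_filter.1 hu).1) g
    (fun u hu => hg u (Finset.mem_filter.1 hu).1) (fun u hu => (Finset.mem_filter.1 hu).2)
  have hsub : s ⊆ s1 ∪ (s2 ∪ s3) := by
    intro u hu
    simp only [s1, s2, s3, Finset.mem_union, Finset.mem_filter, hu, true_and]
    rcases le_total (ht u) (2.2 * totalWeight K) with h | h
    · exact Or.inl h
    · rcases le_total (ht u) (67 * totalWeight K) with h' | h'
      · exact Or.inr (Or.inl ⟨h, h'⟩)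
      · exact Or.inr (Or.inr h')
  have := Finset.card_le_card hsub
  have k1 := Finset.card_union_le s1 (s2 ∪ s3)
  have k2 := Finset.card_union_le s2 s3
  omega

end Count

end UEB


namespace UEB

section Final
open TensorProduct

variable {K : Type*} [Field K] [NumberField K] (Γ₀ : Subgroup Kˣ)

def psiHom (a b : Kˣ) :
    (Additive Γ₀ × Additive Γ₀ × ℤ) →+ Additive (Kˣ × Kˣ) :=
  AddMonoidHom.mk' (fun z => Additive.ofMul
      ((((Additive.toMul z.1 : Γ₀) : Kˣ) * a ^ z.2.2,
        ((Additive.toMul z.2.1 : Γ₀) : Kˣ) * b ^ z.2.2))) (by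
    intro x y
    apply Additive.toMul.injective
    simp only [toMul_ofMul, toMul_add, Prod.fst_add, Prod.snd_add, Subgroup.coe_mul, zpow_add,
      Prod.mk_mul_mk]
    ext1 <;> simp only [] <;> exact mul_mul_mul_comm _ _ _ _)

def phiHom : (Additive Γ₀ × Additive Γ₀ × ℤ) →+
    ((ℚ ⊗[ℤ] (Additive Γ₀)) × (ℚ ⊗[ℤ] (Additive Γ₀)) × ℚ) :=
  AddMonoidHom.mk' (fun z => ((1 : ℚ) ⊗ₜ[ℤ] z.1, (1 : ℚ) ⊗ₜ[ℤ] z.2.1, (z.2.2 : ℚ))) (by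
    intro x y
    simp [TensorProduct.tmul_add])

lemma tmul_torsion {M : Type*} [AddCommGroup M] (m : M) (h : (1 : ℚ) ⊗ₜ[ℤ] m = 0) :
    ∃ n : ℕ, n ≠ 0 ∧ n • m = 0 := by
  have h1 : (TensorProduct.mk ℤ ℚ M 1) m = 0 := h
  rw [IsLocalizedModule.eq_zero_iff (nonZeroDivisors ℤ) (TensorProduct.mk ℤ ℚ M 1)] at h1
  obtain ⟨c, hc⟩ := h1
  have hc0 : (c : ℤ) ≠ 0 := nonZeroDivisors.ne_zero c.2
  refine ⟨(c : ℤ).natAbs, Int.natAbs_ne_zero.2 hc0, ?_⟩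
  have hc' : (c : ℤ) • m = 0 := hc
  rw [← natCast_zsmul]
  rcases Int.natAbs_eq (c : ℤ) with h | h
  · rw [← h]; exact hc'
  · have h2 : (((c : ℤ).natAbs : ℕ) : ℤ) = -(c : ℤ) := by omega
    rw [h2, neg_smul, hc', neg_zero]

lemma phi_ker (a b : Kˣ) (z : Additive Γ₀ × Additive Γ₀ × ℤ) (hz : phiHom Γ₀ z = 0) :
    pn (psiHom Γ₀ a b) z = 0 := by
  obtain ⟨x, y, k⟩ := z
  have hz' : ((1 : ℚ) ⊗ₜ[ℤ] x, (1 : ℚ) ⊗ₜ[ℤ] y, (k : ℚ)) =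
      (0 : (ℚ ⊗[ℤ] (Additive Γ₀)) × (ℚ ⊗[ℤ] (Additive Γ₀)) × ℚ) := hz
  rw [Prod.mk_eq_zero, Prod.mk_eq_zero] at hz'
  obtain ⟨h1, h2, h3⟩ := hz'
  obtain ⟨n, hn, hx⟩ := tmul_torsion x h1
  obtain ⟨m, hm, hy⟩ := tmul_torsion y h2
  have hk : k = 0 := by exact_mod_cast h3
  have ht : (n * m) • ((x, y, k) : Additive Γ₀ × Additive Γ₀ × ℤ) = 0 := by
    rw [Prod.smul_mk, Prod.smul_mk, hk, mul_comm n m, mul_smul, hx, smul_zero, mul_comm m n,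
      mul_smul, hy, smul_zero, smul_zero]
    rfl
  have G := pn_gnorm (psiHom Γ₀ a b)
  have := G.smul (n * m) (x, y, k)
  rw [ht, G.zero] at this
  have hnm : ((n * m : ℕ) : ℝ) ≠ 0 := by exact_mod_cast Nat.mul_ne_zero hn hm
  rcases mul_eq_zero.1 this.symm with h | h
  · exact absurd h hnm
  · exact h

lemma final_bound (r : ℕ)
    (hfin : Module.Finite ℚ (ℚ ⊗[ℤ] (Additive ↥Γ₀)))
    (hr : Module.finrank ℚ (ℚ ⊗[ℤ] (Additive ↥Γ₀)) = r)
    (a b : K) (ha : a ≠ 0) (hb : b ≠ 0) (t : Finset (K × K))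
    (ht : ∀ p ∈ t, (∃ u ∈ Γ₀, ((u : Kˣ) : K) = p.1) ∧ (∃ w ∈ Γ₀, ((w : Kˣ) : K) = p.2) ∧
        a * p.1 + b * p.2 = 1) : t.card ≤ 2 ^ (8 * (2 * r + 2)) := by
  let a' := Units.mk0 a ha
  let b' := Units.mk0 b hb
  let ψ := psiHom Γ₀ a' b'
  have key : ∀ p : t, ∃ u : Kˣ × Kˣ, (u.1 : K) = a * p.1.1 ∧ (u.2 : K) = b * p.1.2 ∧
      ∃ z, ψ z = Additive.ofMul u := by
    rintro ⟨p, hp⟩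
    obtain ⟨⟨u, hu, hu'⟩, ⟨w, hw, hw'⟩, -⟩ := ht p hp
    refine ⟨(u * a', w * b'), ?_, ?_, (Additive.ofMul ⟨u, hu⟩, Additive.ofMul ⟨w, hw⟩, 1), ?_⟩
    · simp [a', hu', mul_comm]
    · simp [b', hw', mul_comm]
    · simp [ψ, psiHom]
  choose f hf1 hf2 hf3 using key
  have hinj : Function.Injective f := by
    intro p q h
    have e1 := hf1 p
    have e2 := hf2 p
    rw [h, hf1 q] at e1
    rw [h, hf2 q] at e2
    exact Subtype.ext (Prod.ext (mul_left_cancel₀ ha e1).symm (mul_left_cancel₀ hb e2).symm)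
  let s : Finset (Kˣ × Kˣ) := Finset.univ.image f
  have hscard : s.card = t.card := by
    rw [Finset.card_image_of_injective _ hinj, Finset.card_univ, Fintype.card_coe]
  have hs : ∀ u ∈ s, IsSol u := by
    intro u hu
    obtain ⟨p, -, rfl⟩ := Finset.mem_image.1 hu
    have := (ht p.1 p.2).2.2
    unfold IsSol
    rw [hf1, hf2, this]
  have hg : ∀ u : Kˣ × Kˣ, ∃ z, u ∈ s → ψ z = Additive.ofMul u := by
    intro u
    by_cases hu : u ∈ s
    · obtain ⟨p, -, rfl⟩ := Finset.mem_image.1 hu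
      obtain ⟨z, hz⟩ := hf3 p
      exact ⟨z, fun _ => hz⟩
    · exact ⟨0, fun h => absurd h hu⟩
  choose g hg using hg
  have hmain := count_all ψ (phiHom Γ₀) (phi_ker Γ₀ a' b') s hs g hg
  have hrk : Module.finrank ℚ ((ℚ ⊗[ℤ] (Additive Γ₀)) × (ℚ ⊗[ℤ] (Additive Γ₀)) × ℚ)
      = 2 * r + 1 := by
    rw [Module.finrank_prod, Module.finrank_prod, hr, Module.finrank_self]; ring
  rw [hrk, hscard] at hmain
  refine hmain.trans ?_
  calc 5 * 242 ^ (2 * r + 1) ≤ 256 * 256 ^ (2 * r + 1) :=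
        Nat.mul_le_mul (by norm_num) (Nat.pow_le_pow_left (by norm_num) _)
    _ = 2 ^ (8 * (2 * r + 2)) := by
        rw [pow_mul, ← pow_succ']; norm_num

lemma finite_of_bound {α : Type*} (S : Set α) (N : ℕ)
    (h : ∀ t : Finset α, (∀ p ∈ t, p ∈ S) → t.card ≤ N) : S.Finite ∧ S.ncard ≤ N := by
  have hS : S.Finite := by
    by_contra hinf
    obtain ⟨t, ht, hc⟩ := Set.Infinite.exists_subset_card_eq hinf (N + 1)
    have := h t (fun p hp => ht hp)
    omega
  refine ⟨hS, ?_⟩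
  rw [Set.ncard_eq_toFinset_card S hS]
  exact h _ (fun p hp => hS.mem_toFinset.1 hp)

end Final

end UEB

open TensorProduct in
/-- **Corollary (Beukers–Schlickewei).** Let `Γ₀` be a subgroup of `K*` of finite rank `r`,
`Γ = Γ₀ × Γ₀`, and `a, b ∈ K*`. Then the equation `a·x + b·y = 1` has at most `2^{8(2r+2)}`
solutions with `(x, y) ∈ Γ`. -/
theorem unit_equation_bound
    {K : Type*} [Field K] [NumberField K]
    (Γ₀ : Subgroup Kˣ) (r : ℕ)
    (hfin : Module.Finite ℚ (ℚ ⊗[ℤ] (Additive ↥Γ₀)))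
    (hr : Module.finrank ℚ (ℚ ⊗[ℤ] (Additive ↥Γ₀)) = r)
    (a b : K) (ha : a ≠ 0) (hb : b ≠ 0) :
    {p : K × K | (∃ u ∈ Γ₀, ((u : Kˣ) : K) = p.1) ∧ (∃ w ∈ Γ₀, ((w : Kˣ) : K) = p.2) ∧
        a * p.1 + b * p.2 = 1}.Finite ∧
      {p : K × K | (∃ u ∈ Γ₀, ((u : Kˣ) : K) = p.1) ∧ (∃ w ∈ Γ₀, ((w : Kˣ) : K) = p.2) ∧
        a * p.1 + b * p.2 = 1}.ncard ≤ 2 ^ (8 * (2 * r + 2)) := by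
  exact UEB.finite_of_bound _ _ (fun t ht =>
    UEB.final_bound Γ₀ r hfin hr a b ha hb t ht)
end

section
/- For all points P₁, P₂, P₃ ∈ ℙ¹(K) and every nonzero prime ideal 𝔭 of the ring of integers of a number field K, the 𝔭-adic logarithmic distance satisfies δ_𝔭(P₁,P₃) ≥ min{ δ_𝔭(P₁,P₂), δ_𝔭(P₂,P₃) }. -/
open NumberField IsDedekindDomain MvPolynomial
open scoped Classical nonZeroDivisors

set_option synthInstance.maxHeartbeats 1000000
set_option maxHeartbeats 1000000

theorem aux_ordAt {K : Type*} [Field K] [NumberField K]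
    (v : HeightOneSpectrum (𝓞 K)) (x : K) : ordAt v x = - WithZero.log (v.valuation K x) := by
  unfold ordAt
  split_ifs with h
  · simp [h]
  · congr 1
    have h' := (v.valuation K).ne_zero_iff.mpr h
    conv_rhs => rw [← WithZero.coe_unzero h']
    rfl

theorem aux_minOrd {K : Type*} [Field K] [NumberField K]
    (v : HeightOneSpectrum (𝓞 K)) (x y : K) :
    minOrd v x y = - WithZero.log (max (v.valuation K x) (v.valuation K y)) := by
  unfold minOrd
  simp only [aux_ordAt]
  split_ifs with h h'
  · simp [h]
  · simp [h']
  · have hx := (v.valuation K).ne_zero_iff.mpr h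
    have hy := (v.valuation K).ne_zero_iff.mpr h'
    rcases le_total (v.valuation K x) (v.valuation K y) with hl | hl
    · rw [max_eq_right hl, min_eq_right (neg_le_neg ((WithZero.log_le_log hx hy).2 hl))]
    · rw [max_eq_left hl, min_eq_left (neg_le_neg ((WithZero.log_le_log hy hx).2 hl))]

theorem aux_det_ne {K : Type*} [Field K] {P Q : P1 K} (h : P ≠ Q) :
    P.rep 0 * Q.rep 1 - P.rep 1 * Q.rep 0 ≠ 0 := by
  intro h0
  apply h
  rw [← P.mk_rep, ← Q.mk_rep, Projectivization.mk_eq_mk_iff']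
  have hQ := Q.rep_nonzero
  by_cases hq : Q.rep 0 = 0
  · have hq1 : Q.rep 1 ≠ 0 := by
      intro h1
      apply hQ
      funext i
      fin_cases i <;> simp [hq, h1]
    refine ⟨P.rep 1 / Q.rep 1, ?_⟩
    funext i
    fin_cases i
    · simp only [Fin.zero_eta, Pi.smul_apply, smul_eq_mul]
      field_simp
      linear_combination -h0
    · simp [hq1]
  · refine ⟨P.rep 0 / Q.rep 0, ?_⟩
    funext i
    fin_cases i
    · simp [hq]
    · simp only [Fin.mk_one, Pi.smul_apply, smul_eq_mul]
      field_simp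
      linear_combination h0

theorem aux_max_ne {K : Type*} [Field K] [NumberField K]
    (v : HeightOneSpectrum (𝓞 K)) (P : P1 K) :
    max (v.valuation K (P.rep 0)) (v.valuation K (P.rep 1)) ≠ 0 := by
  intro h
  apply P.rep_nonzero
  have h0 := le_zero_iff.1 ((le_max_left _ _).trans h.le)
  have h1 := le_zero_iff.1 ((le_max_right _ _).trans h.le)
  rw [map_eq_zero] at h0 h1
  funext i
  fin_cases i <;> simp [h0, h1]

theorem aux_val {K Γ : Type*} [Field K] [LinearOrderedCommGroupWithZero Γ] (w : Valuation K Γ)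
    (x₁ y₁ x₂ y₂ x₃ y₃ : K) :
    w (x₁ * y₃ - y₁ * x₃) * max (w x₂) (w y₂) ≤
      max (w (x₁ * y₂ - y₁ * x₂) * max (w x₃) (w y₃))
        (w (x₂ * y₃ - y₂ * x₃) * max (w x₁) (w y₁)) := by
  rcases le_total (w x₂) (w y₂) with h | h
  · rw [max_eq_right h, ← map_mul, show (x₁ * y₃ - y₁ * x₃) * y₂ =
      (x₁ * y₂ - y₁ * x₂) * y₃ + (x₂ * y₃ - y₂ * x₃) * y₁ by ring]
    refine (w.map_add _ _).trans (max_le_max ?_ ?_) <;> rw [map_mul]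
    · exact mul_le_mul_right (le_max_right _ _) _
    · exact mul_le_mul_right (le_max_right _ _) _
  · rw [max_eq_left h, ← map_mul, show (x₁ * y₃ - y₁ * x₃) * x₂ =
      (x₁ * y₂ - y₁ * x₂) * x₃ + (x₂ * y₃ - y₂ * x₃) * x₁ by ring]
    refine (w.map_add _ _).trans (max_le_max ?_ ?_) <;> rw [map_mul]
    · exact mul_le_mul_right (le_max_left _ _) _
    · exact mul_le_mul_right (le_max_left _ _) _

/-- **Proposition (triangle inequality for the logarithmic distance).**
For all `P₁, P₂, P₃ ∈ ℙ¹(K)` and every nonzero prime `𝔭` of the ring of integers of `K`,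
`δ_𝔭(P₁,P₃) ≥ min{δ_𝔭(P₁,P₂), δ_𝔭(P₂,P₃)}`. -/
theorem logDist_triangle
    {K : Type*} [Field K] [NumberField K]
    (v : HeightOneSpectrum (𝓞 K)) (P₁ P₂ P₃ : P1 K) :
    min (logDist v P₁ P₂) (logDist v P₂ P₃) ≤ logDist v P₁ P₃ := by
  by_cases h13 : P₁ = P₃
  · simp [logDist, h13]
  by_cases h12 : P₁ = P₂
  · subst h12
    exact min_le_right _ _
  by_cases h23 : P₂ = P₃
  · subst h23
    exact min_le_left _ _
  simp only [logDist, h13, h12, h23, if_false, aux_ordAt, aux_minOrd]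
  have d13 := (v.valuation K).ne_zero_iff.mpr (aux_det_ne h13)
  have d12 := (v.valuation K).ne_zero_iff.mpr (aux_det_ne h12)
  have d23 := (v.valuation K).ne_zero_iff.mpr (aux_det_ne h23)
  have m1 := aux_max_ne v P₁
  have m2 := aux_max_ne v P₂
  have m3 := aux_max_ne v P₃
  have key := aux_val (v.valuation K) (P₁.rep 0) (P₁.rep 1) (P₂.rep 0) (P₂.rep 1)
    (P₃.rep 0) (P₃.rep 1)
  rw [min_le_iff, WithTop.coe_le_coe, WithTop.coe_le_coe]
  rcases le_max_iff.1 key with k | k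
  · left
    have := (WithZero.log_le_log (mul_ne_zero d13 m2) (mul_ne_zero d12 m3)).2 k
    rw [WithZero.log_mul d13 m2, WithZero.log_mul d12 m3] at this
    linarith
  · right
    have := (WithZero.log_le_log (mul_ne_zero d13 m2) (mul_ne_zero d23 m1)).2 k
    rw [WithZero.log_mul d13 m2, WithZero.log_mul d23 m1] at this
    linarith
end

section
/- Let φ be an endomorphism of ℙ¹ defined over a number field K with good reduction at a nonzero prime 𝔭 of K. Then for all points P, Q ∈ ℙ¹(K), δ_𝔭(φ(P), φ(Q)) ≥ δ_𝔭(P, Q). -/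
open NumberField IsDedekindDomain MvPolynomial
open scoped Classical nonZeroDivisors

set_option synthInstance.maxHeartbeats 1000000
set_option maxHeartbeats 1000000

section Helpers

theorem aux_eval_homog {R S : Type*} [CommRing R] [CommRing S] (f : R →+* S)
    {p : MvPolynomial (Fin 2) R} {d : ℕ} (hp : p.IsHomogeneous d) (u x y : S) :
    eval₂ f ![u * x, u * y] p = u ^ d * eval₂ f ![x, y] p := by
  rw [eval₂_eq', eval₂_eq', Finset.mul_sum]
  refine Finset.sum_congr rfl fun m hm => ?_
  have h := hp (mem_support_iff.mp hm)
  have h2 : m 0 + m 1 = d := by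
    rw [← h, Finsupp.weight_apply, Finsupp.sum_fintype _ _ (by simp)]
    simp
  simp only [Fin.prod_univ_two, Matrix.cons_val_zero, Matrix.cons_val_one]
  rw [← h2, mul_pow, mul_pow, pow_add]
  ring

theorem aux_dvd {R : Type*} [CommRing R] {F G : MvPolynomial (Fin 2) R} {d : ℕ}
    (hF : F.IsHomogeneous d) (hG : G.IsHomogeneous d) (x₁ y₁ x₂ y₂ : R)
    (h₁ : IsUnit x₁ ∨ IsUnit y₁) :
    x₁ * y₂ - y₁ * x₂ ∣ eval ![x₁, y₁] F * eval ![x₂, y₂] G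
      - eval ![x₁, y₁] G * eval ![x₂, y₂] F := by
  obtain ⟨a, b, hab⟩ : ∃ a b : R, a * x₁ + b * y₁ = 1 := by
    rcases h₁ with h | h
    · obtain ⟨a, ha⟩ := h.exists_left_inv
      exact ⟨a, 0, by simp [ha]⟩
    · obtain ⟨a, ha⟩ := h.exists_left_inv
      exact ⟨0, a, by simp [ha]⟩
  set D := x₁ * y₂ - y₁ * x₂ with hD
  let π := Ideal.Quotient.mk (Ideal.span {D})
  have hπ : ∀ z : R, π z = 0 ↔ D ∣ z := fun z => by
    rw [Ideal.Quotient.eq_zero_iff_mem, Ideal.mem_span_singleton]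
  have key : ∀ (p : MvPolynomial (Fin 2) R), p.IsHomogeneous d →
      π (eval ![x₂, y₂] p) = π (a * x₂ + b * y₂) ^ d * π (eval ![x₁, y₁] p) := by
    intro p hp
    have hx : π x₂ = π (a * x₂ + b * y₂) * π x₁ := by
      rw [← map_mul, ← sub_eq_zero, ← map_sub, hπ]
      exact ⟨-b, by rw [hD]; linear_combination (-x₂) * hab⟩
    have hy : π y₂ = π (a * x₂ + b * y₂) * π y₁ := by
      rw [← map_mul, ← sub_eq_zero, ← map_sub, hπ]
      exact ⟨a, by rw [hD]; linear_combination (-y₂) * hab⟩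
    have e : ∀ x y : R, π (eval ![x, y] p) = eval₂ π ![π x, π y] p := by
      intro x y
      rw [eval, ← RingHom.comp_apply, comp_eval₂Hom]
      simp only [coe_eval₂Hom, RingHom.comp_id]
      congr 1
      ext i; fin_cases i <;> rfl
    rw [e, e, hx, hy, aux_eval_homog π hp]
  rw [← hπ, map_sub, map_mul, map_mul, key F hF, key G hG]
  ring

variable {K : Type*} [Field K] [NumberField K]

theorem aux_ordAt_eq (v : HeightOneSpectrum (𝓞 K)) (x : K) :
    ordAt v x = - WithZero.log (v.valuation K x) := by
  unfold ordAt
  split_ifs with h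
  · simp [h]
  · rw [WithZero.toAdd_unzero_eq_log]

theorem aux_ordAt_mul (v : HeightOneSpectrum (𝓞 K)) {x y : K} (hx : x ≠ 0) (hy : y ≠ 0) :
    ordAt v (x * y) = ordAt v x + ordAt v y := by
  rw [aux_ordAt_eq, aux_ordAt_eq, aux_ordAt_eq, map_mul, WithZero.log_mul]
  · ring
  · exact (v.valuation K).ne_zero_iff.mpr hx
  · exact (v.valuation K).ne_zero_iff.mpr hy

theorem aux_ordAt_nonneg (v : HeightOneSpectrum (𝓞 K)) (x : (v.valuation K).valuationSubring) :
    0 ≤ ordAt v (x : K) := by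
  by_cases hx : (x : K) = 0
  · simp [ordAt, hx]
  rw [aux_ordAt_eq, Left.nonneg_neg_iff, ← WithZero.log_one, WithZero.log_le_log]
  · exact x.2
  · exact (v.valuation K).ne_zero_iff.mpr hx
  · simp

theorem aux_ordAt_unit (v : HeightOneSpectrum (𝓞 K)) (x : (v.valuation K).valuationSubring)
    (hx : IsUnit x) : ordAt v (x : K) = 0 := by
  obtain ⟨y, hy⟩ := hx.exists_right_inv
  have hy' : (x : K) * (y : K) = 1 := by exact_mod_cast congrArg Subtype.val hy
  have h1 := aux_ordAt_mul v (left_ne_zero_of_mul_eq_one hy') (right_ne_zero_of_mul_eq_one hy')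
  have h2 : ordAt v (1 : K) = 0 := by simp [aux_ordAt_eq]
  rw [hy', h2] at h1
  have := aux_ordAt_nonneg v x
  have := aux_ordAt_nonneg v y
  omega

theorem aux_minOrd_smul (v : HeightOneSpectrum (𝓞 K)) {a x y : K} (ha : a ≠ 0)
    (h : x ≠ 0 ∨ y ≠ 0) : minOrd v (a * x) (a * y) = ordAt v a + minOrd v x y := by
  by_cases hx : x = 0
  · have hy : y ≠ 0 := by tauto
    simp [minOrd, hx, aux_ordAt_mul v ha hy]
  · by_cases hy : y = 0
    · simp [minOrd, hx, hy, ha, aux_ordAt_mul v ha hx]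
    · simp [minOrd, hx, hy, ha, aux_ordAt_mul v ha hx, aux_ordAt_mul v ha hy, min_add_add_left]

theorem aux_minOrd_unit (v : HeightOneSpectrum (𝓞 K)) (x y : (v.valuation K).valuationSubring)
    (h : IsUnit x ∨ IsUnit y) : minOrd v (x : K) (y : K) = 0 := by
  have hx := aux_ordAt_nonneg v x
  have hy := aux_ordAt_nonneg v y
  have h0 : ∀ z : (v.valuation K).valuationSubring, IsUnit z → (z : K) ≠ 0 := by
    intro z hz hz0
    exact hz.ne_zero (Subtype.ext hz0)
  unfold minOrd
  rcases h with h | h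
  · have := aux_ordAt_unit v x h
    rw [if_neg (h0 x h)]
    split_ifs <;> omega
  · have := aux_ordAt_unit v y h
    split_ifs with h1 h2
    · omega
    · exact absurd h2 (h0 y h)
    · omega

theorem aux_ne (v : HeightOneSpectrum (𝓞 K)) (x y : (v.valuation K).valuationSubring)
    (h : IsUnit x ∨ IsUnit y) : ![(x : K), (y : K)] ≠ 0 := by
  intro h0
  have h1 : x = 0 := Subtype.ext (congrFun h0 0)
  have h2 : y = 0 := Subtype.ext (congrFun h0 1)
  subst h1 h2
  rcases h with h | h <;> exact h.ne_zero rfl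

theorem aux_exists_rep (v : HeightOneSpectrum (𝓞 K)) (P : P1 K) :
    ∃ (x y : (v.valuation K).valuationSubring) (h : IsUnit x ∨ IsUnit y),
      P = Projectivization.mk K ![(x : K), (y : K)] (aux_ne v x y h) := by
  induction P using Projectivization.ind with
  | h w hw =>
  have main : ∀ a b : K, a ≠ 0 → v.valuation K b ≤ v.valuation K a →
      b / a ∈ (v.valuation K).valuationSubring := by
    intro a b ha hab
    rw [Valuation.mem_valuationSubring_iff, map_div₀]
    exact div_le_one_of_le₀ hab zero_le
  by_cases hle : v.valuation K (w 1) ≤ v.valuation K (w 0)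
  · have ha : w 0 ≠ 0 := by
      intro h0
      apply hw
      have : w 1 = 0 := by
        rw [h0, map_zero] at hle
        exact (v.valuation K).zero_iff.mp (le_antisymm hle zero_le)
      ext i; fin_cases i <;> simp [h0, this]
    refine ⟨1, ⟨w 1 / w 0, main _ _ ha hle⟩, Or.inl isUnit_one, ?_⟩
    rw [Projectivization.mk_eq_mk_iff']
    refine ⟨w 0, ?_⟩
    ext i; fin_cases i
    · simp
    · simp; field_simp
  · push Not at hle
    have ha : w 1 ≠ 0 := by
      intro h0
      rw [h0, map_zero] at hle
      exact not_lt_zero hle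
    refine ⟨⟨w 0 / w 1, main _ _ ha hle.le⟩, 1, Or.inr isUnit_one, ?_⟩
    rw [Projectivization.mk_eq_mk_iff']
    refine ⟨w 1, ?_⟩
    ext i; fin_cases i
    · simp; field_simp
    · simp

theorem aux_det_ne_s12 {x₁ y₁ x₂ y₂ : K} (h₁ : ![x₁, y₁] ≠ 0) (h₂ : ![x₂, y₂] ≠ 0)
    (hne : Projectivization.mk K _ h₁ ≠ Projectivization.mk K _ h₂) :
    x₁ * y₂ - y₁ * x₂ ≠ 0 := by
  intro h0
  apply hne
  rw [Projectivization.mk_eq_mk_iff']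
  by_cases hx : x₂ = 0
  · have hy : y₂ ≠ 0 := by
      rintro rfl
      exact h₂ (by simp [hx])
    have hx1 : x₁ = 0 := by
      rw [hx] at h0
      simpa [hy] using h0
    refine ⟨y₁ / y₂, ?_⟩
    ext i; fin_cases i <;> simp [hx, hx1, hy]
  · refine ⟨x₁ / x₂, ?_⟩
    ext i; fin_cases i
    · simp [hx]
    · simp; field_simp; linear_combination h0

theorem aux_logDist (v : HeightOneSpectrum (𝓞 K)) (x₁ y₁ x₂ y₂ : (v.valuation K).valuationSubring)
    (h₁ : IsUnit x₁ ∨ IsUnit y₁) (h₂ : IsUnit x₂ ∨ IsUnit y₂)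
    (hne : Projectivization.mk K _ (aux_ne v x₁ y₁ h₁) ≠
      Projectivization.mk K _ (aux_ne v x₂ y₂ h₂)) :
    logDist v (Projectivization.mk K _ (aux_ne v x₁ y₁ h₁))
      (Projectivization.mk K _ (aux_ne v x₂ y₂ h₂)) =
      ((ordAt v ((x₁ : K) * y₂ - y₁ * x₂) : ℤ) : WithTop ℤ) := by
  have hD := aux_det_ne_s12 _ _ hne
  have nz : ∀ x y : (v.valuation K).valuationSubring, IsUnit x ∨ IsUnit y →
      (x : K) ≠ 0 ∨ (y : K) ≠ 0 := by
    intro x y h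
    rcases h with h | h
    · exact Or.inl fun h0 => h.ne_zero (Subtype.ext h0)
    · exact Or.inr fun h0 => h.ne_zero (Subtype.ext h0)
  rw [logDist, if_neg hne]
  obtain ⟨a, ha⟩ := Projectivization.exists_smul_eq_mk_rep K _ (aux_ne v x₁ y₁ h₁)
  obtain ⟨b, hb⟩ := Projectivization.exists_smul_eq_mk_rep K _ (aux_ne v x₂ y₂ h₂)
  rw [← ha, ← hb]
  have e : ∀ (c : Kˣ) (x y : K), (c • ![x, y]) 0 = (c : K) * x ∧ (c • ![x, y]) 1 = (c : K) * y := by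
    intro c x y
    exact ⟨rfl, rfl⟩
  rw [(e a _ _).1, (e a _ _).2, (e b _ _).1, (e b _ _).2,
    aux_minOrd_smul v a.ne_zero (nz _ _ h₁), aux_minOrd_smul v b.ne_zero (nz _ _ h₂),
    aux_minOrd_unit v _ _ h₁, aux_minOrd_unit v _ _ h₂]
  have e2 : (a : K) * x₁ * (b * y₂) - a * y₁ * (b * x₂) =
      a * (b * ((x₁ : K) * y₂ - y₁ * x₂)) := by ring
  rw [e2, aux_ordAt_mul v a.ne_zero (mul_ne_zero b.ne_zero hD), aux_ordAt_mul v b.ne_zero hD]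
  congr 1
  ring

end Helpers

/-- **Proposition (good reduction does not decrease the logarithmic distance).**
If `φ` has good reduction at `𝔭`, then `δ_𝔭(φ(P),φ(Q)) ≥ δ_𝔭(P,Q)` for all
`P, Q ∈ ℙ¹(K)`. -/
theorem logDist_le_logDist_image_of_good_reduction
    {K : Type*} [Field K] [NumberField K]
    {d : ℕ} (φ : P1Map K d) (v : HeightOneSpectrum (𝓞 K))
    (hgr : GoodReductionAt φ v) (P Q : P1 K) :
    logDist v P Q ≤ logDist v (φ.toFun P) (φ.toFun Q) := by
  by_cases him : φ.toFun P = φ.toFun Q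
  · rw [logDist, logDist, if_pos him]
    exact le_top
  have hPQ : P ≠ Q := fun h => him (by rw [h])
  obtain ⟨c, hc, F₀, G₀, hF, hG, -, hgood⟩ := hgr
  have inj : Function.Injective (v.valuation (K := K)).valuationSubring.subtype :=
    Subtype.val_injective
  have homC : ∀ {p : MvPolynomial (Fin 2) K}, p.IsHomogeneous d → (C c * p).IsHomogeneous d := by
    intro p hp
    simpa using (isHomogeneous_C (Fin 2) c).mul hp
  have homF : F₀.IsHomogeneous d := by
    apply IsHomogeneous.of_map inj
    rw [hF]; exact homC φ.homF
  have homG : G₀.IsHomogeneous d := by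
    apply IsHomogeneous.of_map inj
    rw [hG]; exact homC φ.homG
  have evs : ∀ (H₀ : MvPolynomial (Fin 2) (v.valuation (K := K)).valuationSubring)
      (H : MvPolynomial (Fin 2) K),
      MvPolynomial.map ((v.valuation (K := K)).valuationSubring.subtype) H₀ = C c * H →
      ∀ x y, ((eval ![x, y] H₀ : (v.valuation (K := K)).valuationSubring) : K)
        = c * eval ![(x : K), (y : K)] H := by
    intro H₀ H hH x y
    have h1 : eval ![(x : K), (y : K)] (C c * H) = c * eval ![(x : K), (y : K)] H := by simp
    rw [← h1, ← hH, eval_map]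
    change (v.valuation (K := K)).valuationSubring.subtype (eval ![x, y] H₀) = _
    rw [eval, ← RingHom.comp_apply, comp_eval₂Hom]
    simp only [coe_eval₂Hom, RingHom.comp_id]
    congr 1
    ext i; fin_cases i <;> rfl
  have unit : ∀ x y : (v.valuation (K := K)).valuationSubring, IsUnit x ∨ IsUnit y →
      IsUnit (eval ![x, y] F₀) ∨ IsUnit (eval ![x, y] G₀) := by
    intro x y hxy
    by_contra hcon
    push Not at hcon
    set r := ((algebraMap (IsLocalRing.ResidueField (v.valuation (K := K)).valuationSubring)
              (AlgebraicClosure (IsLocalRing.ResidueField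
                (v.valuation (K := K)).valuationSubring))).comp
            (IsLocalRing.residue _)) with hr
    have hr0 : ∀ z, r z = 0 ↔ ¬ IsUnit z := by
      intro z
      rw [hr, RingHom.comp_apply, map_eq_zero,
        ← IsLocalRing.residue_ne_zero_iff_isUnit, not_not]
    have e : ∀ p, eval ![r x, r y] (MvPolynomial.map r p) = r (eval ![x, y] p) := by
      intro p
      rw [eval_map, eval, ← RingHom.comp_apply, comp_eval₂Hom]
      simp only [coe_eval₂Hom, RingHom.comp_id]
      congr 1
      ext i; fin_cases i <;> rfl
    have := hgood (r x) (r y) (by rw [e, hr0]; exact hcon.1) (by rw [e, hr0]; exact hcon.2)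
    rw [hr0, hr0] at this
    tauto
  have img : ∀ (x y : (v.valuation (K := K)).valuationSubring) (h : IsUnit x ∨ IsUnit y),
      φ.toFun (Projectivization.mk K _ (aux_ne v x y h)) =
        Projectivization.mk K _ (aux_ne v _ _ (unit x y h)) := by
    intro x y h
    have hne : ![eval ![(x : K), (y : K)] φ.F, eval ![(x : K), (y : K)] φ.G] ≠ 0 := by
      intro h0
      have h1 : eval ![(x : K), (y : K)] φ.F = 0 := congrFun h0 0
      have h2 : eval ![(x : K), (y : K)] φ.G = 0 := congrFun h0 1
      apply aux_ne v _ _ (unit x y h)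
      rw [evs _ _ hF, evs _ _ hG, h1, h2]
      simp
    rw [φ.compat _ _ (aux_ne v x y h) hne, eq_comm, Projectivization.mk_eq_mk_iff']
    refine ⟨c, ?_⟩
    rw [evs _ _ hF, evs _ _ hG]
    ext i; fin_cases i <;> simp
  obtain ⟨x₁, y₁, h₁, rfl⟩ := aux_exists_rep v P
  obtain ⟨x₂, y₂, h₂, rfl⟩ := aux_exists_rep v Q
  rw [img _ _ h₁, img _ _ h₂] at him ⊢
  rw [aux_logDist v _ _ _ _ h₁ h₂ hPQ, aux_logDist v _ _ _ _ (unit _ _ h₁) (unit _ _ h₂) him]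
  have hE := aux_det_ne_s12 _ _ him
  have hD := aux_det_ne_s12 _ _ hPQ
  obtain ⟨k, hk⟩ := aux_dvd homF homG x₁ y₁ x₂ y₂ h₁
  have hk' := congrArg (Subtype.val) hk
  push_cast at hk'
  rw [hk'] at hE ⊢
  rw [aux_ordAt_mul v hD (right_ne_zero_of_mul hE)]
  have := aux_ordAt_nonneg v k
  rw [WithTop.coe_le_coe]
  omega
end
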